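/- arXiv:1911.10499 — 4 statements merged into one kernel-verified Lean document; each statement's English description precedes it below -/
import Mathlib

section
/- Let Q be a privacy protocol all of whose entries are positive and whose rank is a, and let μ be a Borel probability measure on the simplex 𝒫 having a continuous density f, with p ↦ log det D_p μ-integrable. Then liminf_{n→∞} n · MSE^distr_{μ,n}(Q,Π_opt,n) ≥ (a/(2πe)) · e^{(2/(a−1))·γ_μ(Q)}. -/
/-!
The bound is a Bayesian Cramér–Rao (van Trees) inequality followed by Jensen's inequality.

Let `V_p = D_p⁻¹ - p pᵀ` (`Vmat`). It is positive semidefinite, its rows are tangent to the simplex,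
and `V D V = V`, so that it is the Cramér–Rao matrix of one observation. In the affine chart of the
simplex consider the vector fields `φ V_{x,·}`, where `φ` is a `C¹` function supported in the
interior of the chart, with `|φ| ≤ f` and `f ≥ ε` on its support. Integrating by parts the divergence
of `φ V_{x,·} L_y` against `p_x - T_x(y)` and summing over `x` and `y` gives `-∫ φ tr V`, whatever the
estimator `T`. Weighted AM–GM, with the second moment of the i.i.d. score computed from `V D V = V`,
yields (`vanTrees`)
`2 ∫ φ tr V ≤ n · MSE(T) + ∫ f tr V + O(1/n)`.
Since `∫ φ tr V` can be taken as close as desired to `∫ f tr V` (`exists_smooth_minorant`), the limit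
inferior of `n · MSE` is at least `∫ tr V_p dμ(p)` (`eventually_integral_trace_le`).

AM–GM for the eigenvalues of `V_p + c · 𝟙𝟙ᵀ`, for the optimal `c`, gives
`tr V_p ≥ a · (det D_p)^{-1/(a-1)}` (`trace_Vmat_ge`), and Jensen's inequality for the exponential
turns the integral of the right-hand side into the stated constant
(`gamma_bound_le_integral_trace`).

The limit inferior is taken in `ℝ`, so `n · MSE` must also be shown to be bounded above
(`exists_bound_MSEdistr`). The posterior mean minimises the mean squared error, and the
unbiased estimator that averages a left inverse of `Q` over the observations has risk `O(1/n)`.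
-/

open MeasureTheory Matrix Finset Filter Real

noncomputable section

/-- The probability simplex in `ℝ^a`. -/
def simplex (a : ℕ) : Set (Fin a → ℝ) :=
  {p | (∀ x, 0 ≤ p x) ∧ ∑ x, p x = 1}

/-- Likelihood `L_y(p) = ∏ i, (Qp)_{y i}`. -/
def lik {a b n : ℕ} (Q : Matrix (Fin b) (Fin a) ℝ) (y : Fin n → Fin b)
    (p : Fin a → ℝ) : ℝ :=
  ∏ i, Q.mulVec p (y i)

/-- Mean squared error for distribution estimation. -/
def MSEdistr {a b n : ℕ} (Q : Matrix (Fin b) (Fin a) ℝ) (μ : Measure (Fin a → ℝ))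
    (Est : (Fin n → Fin b) → (Fin a → ℝ)) : ℝ :=
  ∑ y : (Fin n → Fin b), ∫ p, (∑ x, (p x - Est y x) ^ 2) * lik Q y p ∂μ

/-- The posterior-mean estimator for distribution estimation. -/
def PiOpt {a b n : ℕ} (Q : Matrix (Fin b) (Fin a) ℝ) (μ : Measure (Fin a → ℝ))
    (y : Fin n → Fin b) : Fin a → ℝ :=
  fun x => (∫ p, p x * lik Q y p ∂μ) / (∫ p, lik Q y p ∂μ)

/-- Empirical frequency vector of a data vector. -/
def freqVec {a n : ℕ} (xv : Fin n → Fin a) : Fin a → ℝ :=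
  fun α => ((Finset.univ.filter fun i => xv i = α).card : ℝ) / n

/-- Joint weight `w(x⃗,y⃗) = ∫ ∏ i, p_{x_i} Q_{y_i|x_i} dμ(p)`. -/
def wgt {a b n : ℕ} (Q : Matrix (Fin b) (Fin a) ℝ) (μ : Measure (Fin a → ℝ))
    (xv : Fin n → Fin a) (y : Fin n → Fin b) : ℝ :=
  ∫ p, (∏ i, p (xv i) * Q (y i) (xv i)) ∂μ

/-- Mean squared error for frequency estimation. -/
def MSEfreq {a b n : ℕ} (Q : Matrix (Fin b) (Fin a) ℝ) (μ : Measure (Fin a → ℝ))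
    (Est : (Fin n → Fin b) → (Fin a → ℝ)) : ℝ :=
  ∑ xv : (Fin n → Fin a), ∑ y : (Fin n → Fin b),
    wgt Q μ xv y * ∑ α, (freqVec xv α - Est y α) ^ 2

/-- The posterior-mean estimator for frequency estimation. -/
def PhiOpt {a b n : ℕ} (Q : Matrix (Fin b) (Fin a) ℝ) (μ : Measure (Fin a → ℝ))
    (y : Fin n → Fin b) : Fin a → ℝ :=
  fun α => (∑ xv : (Fin n → Fin a), wgt Q μ xv y * freqVec xv α) /
    (∑ xv : (Fin n → Fin a), wgt Q μ xv y)

/-- `P(φ, y⃗) = ∑_{x⃗ : F(x⃗) = φ} w(x⃗, y⃗)`. -/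
def Pphi {a b n : ℕ} (Q : Matrix (Fin b) (Fin a) ℝ) (μ : Measure (Fin a → ℝ))
    (φ : Fin a → ℝ) (y : Fin n → Fin b) : ℝ := by
  classical
  exact ∑ xv ∈ Finset.univ.filter (fun xv : Fin n → Fin a => freqVec xv = φ), wgt Q μ xv y

/-- Conditional Shannon entropy `H_n(F | Y⃗)` (terms with zero probability vanish since
`Real.log 0 = 0`). -/
def HFcond {a b : ℕ} (Q : Matrix (Fin b) (Fin a) ℝ) (μ : Measure (Fin a → ℝ))
    (n : ℕ) : ℝ := by
  classical
  exact -(∑ y : (Fin n → Fin b), ∑ φ ∈ Finset.image (freqVec (a := a) (n := n)) Finset.univ,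
      Pphi Q μ φ y * Real.log (Pphi Q μ φ y /
        ∑ φ' ∈ Finset.image (freqVec (a := a) (n := n)) Finset.univ, Pphi Q μ φ' y))

/-- The set `Δ = {q ∈ ℝ^m : q ≥ 0, ∑ q ≤ 1}`. -/
def stdCorner (m : ℕ) : Set (Fin m → ℝ) :=
  {q | (∀ i, 0 ≤ q i) ∧ ∑ i, q i ≤ 1}

/-- The identification `Δ ⊂ ℝ^{a-1} → 𝒫 ⊂ ℝ^a`,
`q ↦ (q_1, …, q_{a-1}, 1 - ∑ q_i)`. -/
def emb (a : ℕ) (q : Fin (a - 1) → ℝ) : Fin a → ℝ :=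
  fun x => if h : (x : ℕ) < a - 1 then q ⟨x.1, h⟩ else 1 - ∑ i, q i

/-- `μ` has density `f` (w.r.t. Lebesgue measure on `Δ`). -/
def IsDensity {a : ℕ} (μ : Measure (Fin a → ℝ)) (f : (Fin (a - 1) → ℝ) → ℝ) : Prop :=
  Measurable f ∧ (∀ q, 0 ≤ f q) ∧ (∫ q in stdCorner (a - 1), f q) = 1 ∧
  ∀ g : (Fin a → ℝ) → ℝ, Measurable g → (∃ C, ∀ p, |g p| ≤ C) →
    (∫ p, g p ∂μ) = ∫ q in stdCorner (a - 1), g (emb a q) * f q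

/-- `μ` has continuous density `f`. -/
def IsContDensity {a : ℕ} (μ : Measure (Fin a → ℝ)) (f : (Fin (a - 1) → ℝ) → ℝ) : Prop :=
  ContinuousOn f (stdCorner (a - 1)) ∧ (∀ q, 0 ≤ f q) ∧
  (∫ q in stdCorner (a - 1), f q) = 1 ∧
  ∀ g : (Fin a → ℝ) → ℝ, Measurable g → (∃ C, ∀ p, |g p| ≤ C) →
    (∫ p, g p ∂μ) = ∫ q in stdCorner (a - 1), g (emb a q) * f q

/-- Normalisation constant `C_{y⃗} = ∫_Δ f(q) L_{y⃗}(p(q)) dλ(q)`. -/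
def Cw {a b n : ℕ} (Q : Matrix (Fin b) (Fin a) ℝ) (f : (Fin (a - 1) → ℝ) → ℝ)
    (y : Fin n → Fin b) : ℝ :=
  ∫ q in stdCorner (a - 1), f q * lik Q y (emb a q)

/-- Posterior density `g_{y⃗}(q) = f(q) L_{y⃗}(p(q)) / C_{y⃗}`. -/
def gpost {a b n : ℕ} (Q : Matrix (Fin b) (Fin a) ℝ) (f : (Fin (a - 1) → ℝ) → ℝ)
    (y : Fin n → Fin b) (q : Fin (a - 1) → ℝ) : ℝ :=
  f q * lik Q y (emb a q) / Cw Q f y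

/-- Conditional differential entropy `h_n(P | Y⃗)`. -/
def hCond {a b : ℕ} (Q : Matrix (Fin b) (Fin a) ℝ) (f : (Fin (a - 1) → ℝ) → ℝ)
    (n : ℕ) : ℝ :=
  ∑ y : (Fin n → Fin b),
    Cw Q f y * (-(∫ q in stdCorner (a - 1), gpost Q f y q * Real.log (gpost Q f y q)))

/-- The matrix `D_p = Qᵀ · diag(Qp)⁻¹ · Q`. -/
def Dmat {a b : ℕ} (Q : Matrix (Fin b) (Fin a) ℝ) (p : Fin a → ℝ) :
    Matrix (Fin a) (Fin a) ℝ :=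
  Qᵀ * Matrix.diagonal (fun y => (Q.mulVec p y)⁻¹) * Q

/-- The constant `γ_μ(Q)`. -/
def gammaMu {a b : ℕ} (Q : Matrix (Fin b) (Fin a) ℝ) (μ : Measure (Fin a → ℝ)) : ℝ :=
  (((a : ℝ) - 1) / 2) * Real.log (2 * π * Real.exp 1) -
    (1 / 2) * ∫ p, Real.log (Dmat Q p).det ∂μ

/-- The truncated column `w_x = (Q_{1|x}, …, Q_{b-1|x})`. -/
def wcol {a b : ℕ} (Q : Matrix (Fin b) (Fin a) ℝ) (x : Fin a) : Fin (b - 1) → ℝ :=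
  fun y => Q ⟨y.1, lt_of_lt_of_le y.2 (Nat.sub_le b 1)⟩ x

/-- The matrix `E_x = diag(w_x) - w_x w_xᵀ`. -/
def Emat {a b : ℕ} (Q : Matrix (Fin b) (Fin a) ℝ) (x : Fin a) :
    Matrix (Fin (b - 1)) (Fin (b - 1)) ℝ :=
  Matrix.diagonal (wcol Q x) - Matrix.vecMulVec (wcol Q x) (wcol Q x)

/-- The matrix `G_p = ∑ x, p_x E_x`. -/
def Gmat {a b : ℕ} (Q : Matrix (Fin b) (Fin a) ℝ) (p : Fin a → ℝ) :
    Matrix (Fin (b - 1)) (Fin (b - 1)) ℝ :=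
  ∑ x, p x • Emat Q x

/-- The constant `δ_μ(Q)`. -/
def deltaMu {a b : ℕ} (Q : Matrix (Fin b) (Fin a) ℝ) (μ : Measure (Fin a → ℝ)) : ℝ :=
  gammaMu Q μ +
    (1 / 2) * ∫ p, (Real.log (Gmat Q p).det - ∑ y, Real.log (Q.mulVec p y)) ∂μ

/-- `Q` satisfies `ε`-local differential privacy. -/
def SatisfiesLDP {a b : ℕ} (Q : Matrix (Fin b) (Fin a) ℝ) (ε : ℝ) : Prop :=
  ∀ x x' : Fin a, ∀ y : Fin b, Q y x' ≤ Real.exp ε * Q y x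

/-! ### Moments of i.i.d. sums -/

/-- Second moment of a shifted i.i.d. sum: if `r` is a weight of total mass `1` on a finite set and
`g` is centred for `r`, then `𝔼 (α + ∑ g(yᵢ))² = α² + n 𝔼 g²` under the `n`-fold product of `r`. -/
lemma sum_prod_mul_add_sum_sq {b : ℕ} (r g : Fin b → ℝ) (hr : ∑ y, r y = 1)
    (hg : ∑ y, r y * g y = 0) (n : ℕ) (α : ℝ) :
    ∑ y : Fin n → Fin b, (∏ i, r (y i)) * (α + ∑ i, g (y i)) ^ 2
      = α ^ 2 + n * ∑ y, r y * g y ^ 2 := by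
  induction n generalizing α with
  | zero => simp
  | succ n ih =>
    rw [← (Fin.consEquiv fun _ : Fin (n + 1) => Fin b).sum_comp, Fintype.sum_prod_type]
    have h1 : ∀ y0 : Fin b, ∑ y : Fin n → Fin b,
        (∏ i, r ((Fin.consEquiv fun _ : Fin (n + 1) => Fin b) (y0, y) i)) *
          (α + ∑ i, g ((Fin.consEquiv fun _ : Fin (n + 1) => Fin b) (y0, y) i)) ^ 2
        = r y0 * ((α + g y0) ^ 2 + n * ∑ y, r y * g y ^ 2) := by
      intro y0
      rw [← ih, Finset.mul_sum]
      refine Finset.sum_congr rfl fun y _ => ?_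
      simp only [Fin.consEquiv, Equiv.coe_fn_mk, Fin.prod_univ_succ, Fin.sum_univ_succ,
        Fin.cons_zero, Fin.cons_succ]
      ring
    simp only [h1]
    have h2 : ∀ y0, r y0 * ((α + g y0) ^ 2 + n * ∑ y, r y * g y ^ 2)
        = (α ^ 2 + n * ∑ y, r y * g y ^ 2) * r y0 + 2 * α * (r y0 * g y0)
          + r y0 * g y0 ^ 2 := by
      intro y0; ring
    simp only [h2, Finset.sum_add_distrib, ← Finset.mul_sum, hr, hg]
    push_cast; ring

/-! ### Linear algebra of the information matrix -/

/-- The inverse-information matrix `V_p = D_p⁻¹ - p pᵀ`; on the tangent space of the simplex it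
is the asymptotic covariance (Cramér–Rao) matrix of a single observation. -/
def Vmat {a b : ℕ} (Q : Matrix (Fin b) (Fin a) ℝ) (p : Fin a → ℝ) : Matrix (Fin a) (Fin a) ℝ :=
  (Dmat Q p)⁻¹ - Matrix.vecMulVec p p

section LinAlg
variable {a b : ℕ} {Q : Matrix (Fin b) (Fin a) ℝ} {p : Fin a → ℝ}

lemma Dmat_apply_vec (v w : Fin a → ℝ) :
    v ⬝ᵥ (Dmat Q p *ᵥ w) = ∑ y, (Q *ᵥ v) y * (Q *ᵥ w) y / (Q *ᵥ p) y := by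
  unfold Dmat
  rw [← Matrix.mulVec_mulVec, ← Matrix.mulVec_mulVec, Matrix.dotProduct_mulVec,
    Matrix.vecMul_transpose]
  simp only [dotProduct, Matrix.mulVec_diagonal]
  exact Finset.sum_congr rfl fun y _ => by ring

lemma Dmat_transpose : (Dmat Q p)ᵀ = Dmat Q p := by
  simp [Dmat, Matrix.transpose_mul, Matrix.mul_assoc]

lemma mulVec_injective_of_rank (hrank : Q.rank = a) : Function.Injective (Q *ᵥ ·) := by
  have h := Q.mulVecLin.finrank_range_add_finrank_ker
  rw [← Matrix.rank, hrank] at h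
  simp at h
  exact LinearMap.ker_eq_bot.1 h

lemma Dmat_posDef (hrank : Q.rank = a) (hp : ∀ y, 0 < (Q *ᵥ p) y) : (Dmat Q p).PosDef := by
  have h1 : (Matrix.diagonal fun y => ((Q *ᵥ p) y)⁻¹).PosDef :=
    Matrix.PosDef.diagonal fun y => inv_pos.2 (hp y)
  have := h1.conjTranspose_mul_mul_same (mulVec_injective_of_rank hrank)
  simpa [Dmat] using this

lemma Dmat_mulVec_self (hQcol : ∀ x, ∑ y, Q y x = 1) (hp : ∀ y, 0 < (Q *ᵥ p) y) :
    Dmat Q p *ᵥ p = 1 := by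
  unfold Dmat
  rw [← Matrix.mulVec_mulVec, ← Matrix.mulVec_mulVec]
  ext x
  rw [Pi.one_apply, ← hQcol x]
  change ∑ y, Qᵀ x y * (Matrix.diagonal (fun y => ((Q *ᵥ p) y)⁻¹) *ᵥ (Q *ᵥ p)) y = ∑ y, Q y x
  refine Finset.sum_congr rfl fun y _ => ?_
  rw [Matrix.transpose_apply, Matrix.mulVec_diagonal, inv_mul_cancel₀ (hp y).ne', mul_one]

lemma Dinv_mul (hrank : Q.rank = a) (hp : ∀ y, 0 < (Q *ᵥ p) y) :
    (Dmat Q p)⁻¹ * Dmat Q p = 1 :=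
  Matrix.nonsing_inv_mul _ (Dmat_posDef hrank hp).det_pos.ne'.isUnit

lemma mul_Dinv (hrank : Q.rank = a) (hp : ∀ y, 0 < (Q *ᵥ p) y) :
    Dmat Q p * (Dmat Q p)⁻¹ = 1 :=
  Matrix.mul_nonsing_inv _ (Dmat_posDef hrank hp).det_pos.ne'.isUnit

lemma Vmat_transpose : (Vmat Q p)ᵀ = Vmat Q p := by
  rw [Vmat, Matrix.transpose_sub, Matrix.transpose_nonsing_inv, Dmat_transpose]
  congr 1
  ext i j; simp [Matrix.vecMulVec_apply, mul_comm]

lemma Dinv_mulVec_one (hQcol : ∀ x, ∑ y, Q y x = 1) (hrank : Q.rank = a)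
    (hp : ∀ y, 0 < (Q *ᵥ p) y) : (Dmat Q p)⁻¹ *ᵥ 1 = p := by
  rw [← Dmat_mulVec_self hQcol hp, Matrix.mulVec_mulVec, Dinv_mul hrank hp, Matrix.one_mulVec]

lemma Vmat_mulVec_one (hQcol : ∀ x, ∑ y, Q y x = 1) (hrank : Q.rank = a)
    (hp : ∀ y, 0 < (Q *ᵥ p) y) (hs : ∑ x, p x = 1) : Vmat Q p *ᵥ 1 = 0 := by
  rw [Vmat, Matrix.sub_mulVec, Dinv_mulVec_one hQcol hrank hp, Matrix.vecMulVec_mulVec]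
  ext x
  simp [dotProduct, hs]

lemma Vmat_row_sum (hQcol : ∀ x, ∑ y, Q y x = 1) (hrank : Q.rank = a)
    (hp : ∀ y, 0 < (Q *ᵥ p) y) (hs : ∑ x, p x = 1) (x : Fin a) : ∑ x', Vmat Q p x x' = 0 := by
  have := congrFun (Vmat_mulVec_one hQcol hrank hp hs) x
  simpa [Matrix.mulVec, dotProduct] using this

lemma Dmat_mul_Vmat (hQcol : ∀ x, ∑ y, Q y x = 1) (hrank : Q.rank = a)
    (hp : ∀ y, 0 < (Q *ᵥ p) y) :
    Dmat Q p * Vmat Q p = 1 - Matrix.vecMulVec 1 p := by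
  rw [Vmat, Matrix.mul_sub, mul_Dinv hrank hp, Matrix.mul_vecMulVec, Dmat_mulVec_self hQcol hp]

lemma Vmat_mul_Dmat_mul_Vmat (hQcol : ∀ x, ∑ y, Q y x = 1) (hrank : Q.rank = a)
    (hp : ∀ y, 0 < (Q *ᵥ p) y) (hs : ∑ x, p x = 1) :
    Vmat Q p * Dmat Q p * Vmat Q p = Vmat Q p := by
  rw [Matrix.mul_assoc, Dmat_mul_Vmat hQcol hrank hp, Matrix.mul_sub, Matrix.mul_one,
    Matrix.mul_vecMulVec, Vmat_mulVec_one hQcol hrank hp hs]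
  ext i j; simp [Matrix.vecMulVec_apply]

lemma Vmat_posSemidef (hQcol : ∀ x, ∑ y, Q y x = 1) (hrank : Q.rank = a)
    (hp : ∀ y, 0 < (Q *ᵥ p) y) (hs : ∑ x, p x = 1) : (Vmat Q p).PosSemidef := by
  have := (Dmat_posDef hrank hp).posSemidef.conjTranspose_mul_mul_same (Vmat Q p)
  rwa [Matrix.conjTranspose_eq_transpose_of_trivial, Vmat_transpose,
    Vmat_mul_Dmat_mul_Vmat hQcol hrank hp hs] at this

/-- The one-observation information in the direction of row `x` of `V_p` is `(V_p)ₓₓ`. -/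
lemma sum_score_sq (hQcol : ∀ x, ∑ y, Q y x = 1) (hrank : Q.rank = a)
    (hp : ∀ y, 0 < (Q *ᵥ p) y) (hs : ∑ x, p x = 1) (x : Fin a) :
    ∑ y, (Q *ᵥ p) y * ((Q *ᵥ Vmat Q p x) y / (Q *ᵥ p) y) ^ 2 = Vmat Q p x x := by
  have h1 : ∑ y, (Q *ᵥ p) y * ((Q *ᵥ Vmat Q p x) y / (Q *ᵥ p) y) ^ 2
      = Vmat Q p x ⬝ᵥ (Dmat Q p *ᵥ Vmat Q p x) := by
    rw [Dmat_apply_vec]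
    refine Finset.sum_congr rfl fun y _ => ?_
    have := (hp y).ne'
    field_simp
  rw [h1]
  conv_rhs => rw [← Vmat_mul_Dmat_mul_Vmat hQcol hrank hp hs, Matrix.mul_assoc]
  rw [Matrix.mul_apply, dotProduct]
  refine Finset.sum_congr rfl fun z _ => ?_
  congr 1
  rw [Matrix.mul_apply]
  change ∑ w, Dmat Q p z w * Vmat Q p x w = _
  refine Finset.sum_congr rfl fun w _ => ?_
  have : Vmat Q p w x = Vmat Q p x w := by
    rw [← Matrix.transpose_apply (Vmat Q p), Vmat_transpose]
  rw [this]

/-- `V_p` is singular (it kills the all-ones vector `𝟙`); filling its kernel with `c · 𝟙𝟙ᵀ` gives a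
matrix whose determinant is `c a² / det D_p`, by the matrix determinant lemma of rank two. -/
lemma det_Vmat_add (hQcol : ∀ x, ∑ y, Q y x = 1) (hrank : Q.rank = a)
    (hp : ∀ y, 0 < (Q *ᵥ p) y) (hs : ∑ x, p x = 1) (c : ℝ) :
    (Dmat Q p).det * (Vmat Q p + c • Matrix.vecMulVec 1 1).det = c * (a : ℝ) ^ 2 := by
  have hpD : p ⬝ᵥ (Dmat Q p *ᵥ 1) = a := by
    rw [Matrix.dotProduct_mulVec, ← Matrix.mulVec_transpose, Dmat_transpose,
      Dmat_mulVec_self hQcol hp]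
    simp [dotProduct]
  let U : Matrix (Fin a) (Fin 2) ℝ := Matrix.of fun i => ![-1, c * (Dmat Q p *ᵥ 1) i]
  let W : Matrix (Fin 2) (Fin a) ℝ := Matrix.of ![p, 1]
  have h1 : Dmat Q p * (Vmat Q p + c • Matrix.vecMulVec 1 1) = 1 + U * W := by
    rw [Matrix.mul_add, Dmat_mul_Vmat hQcol hrank hp, Matrix.mul_smul, Matrix.mul_vecMulVec]
    ext i j
    rw [Matrix.add_apply, Matrix.add_apply, Matrix.mul_apply, Fin.sum_univ_two,
      Matrix.sub_apply, Matrix.smul_apply, Matrix.vecMulVec_apply, Matrix.vecMulVec_apply]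
    simp [U, W]
    ring
  rw [← Matrix.det_mul, h1, Matrix.det_one_add_mul_comm, Matrix.det_fin_two]
  have e1 : ∑ x, p x * -1 = -1 := by rw [← Finset.sum_mul, hs]; ring
  have e2 : ∑ x, p x * (c * (Dmat Q p *ᵥ 1) x) = c * a := by
    rw [← hpD, dotProduct, Finset.mul_sum]
    exact Finset.sum_congr rfl fun x _ => by ring
  have f00 : ((1 : Matrix (Fin 2) (Fin 2) ℝ) + W * U) 0 0 = 0 := by
    rw [Matrix.add_apply, Matrix.mul_apply]
    simp [W, U, hs]
  have f01 : ((1 : Matrix (Fin 2) (Fin 2) ℝ) + W * U) 0 1 = c * a := by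
    rw [Matrix.add_apply, Matrix.mul_apply]
    simp [W, U, e2]
  have f10 : ((1 : Matrix (Fin 2) (Fin 2) ℝ) + W * U) 1 0 = -(a : ℝ) := by
    rw [Matrix.add_apply, Matrix.mul_apply]
    simp [W, U]
  rw [f00, f01, f10]; ring

/-- AM–GM for the eigenvalues of a positive semidefinite matrix. -/
lemma det_le_trace_div_pow {m : ℕ} (hm : 0 < m) {A : Matrix (Fin m) (Fin m) ℝ}
    (hA : A.PosSemidef) : A.det ≤ (A.trace / m) ^ m := by
  have hm' : (m : ℝ) ≠ 0 := by positivity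
  have h := Real.geom_mean_le_arith_mean_weighted Finset.univ (fun _ => (m : ℝ)⁻¹)
    hA.1.eigenvalues (fun _ _ => by positivity) (by simp [hm'])
    (fun i _ => hA.eigenvalues_nonneg i)
  have h0 : 0 ≤ ∏ i, hA.1.eigenvalues i := Finset.prod_nonneg fun i _ => hA.eigenvalues_nonneg i
  rw [Real.finsetProd_rpow _ _ fun i _ => hA.eigenvalues_nonneg i] at h
  have h2 := pow_le_pow_left₀ (by positivity) h m
  rw [← Real.rpow_natCast, ← Real.rpow_mul h0, inv_mul_cancel₀ hm', Real.rpow_one] at h2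
  rw [hA.1.det_eq_prod_eigenvalues, hA.1.trace_eq_sum_eigenvalues]
  simp only [RCLike.ofReal_real_eq_id, id]
  refine h2.trans_eq ?_
  rw [← Finset.mul_sum, div_eq_inv_mul]

lemma one_add_inv_pow_le (d : ℕ) (hd : 1 ≤ d) : (((d : ℝ) + 1) / d) ^ d ≤ d + 1 := by
  have h0 : (0 : ℝ) < d := by exact_mod_cast hd
  rcases eq_or_lt_of_le hd with h | h
  · subst h; norm_num
  · have h1 : ((d : ℝ) + 1) / d ≤ Real.exp (1 / d) := by
      have := Real.add_one_le_exp (1 / (d : ℝ))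
      refine le_trans (le_of_eq ?_) this
      field_simp; ring
    calc (((d : ℝ) + 1) / d) ^ d ≤ Real.exp (1 / d) ^ d :=
          pow_le_pow_left₀ (by positivity) h1 d
      _ = Real.exp 1 := by rw [← Real.exp_nat_mul]; congr 1; field_simp
      _ ≤ 3 := Real.exp_one_lt_three.le
      _ ≤ d + 1 := by
        have : (2 : ℝ) ≤ d := by exact_mod_cast h
        linarith

/-- The trace of the Cramér–Rao matrix dominates `a · det(D_p)^{-1/(a-1)}`. -/
lemma trace_Vmat_ge (ha : 2 ≤ a) (hQcol : ∀ x, ∑ y, Q y x = 1) (hrank : Q.rank = a)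
    (hp : ∀ y, 0 < (Q *ᵥ p) y) (hs : ∑ x, p x = 1) :
    a * Real.exp (-(1 / ((a : ℝ) - 1)) * Real.log (Dmat Q p).det) ≤ (Vmat Q p).trace := by
  obtain ⟨d, rfl⟩ : ∃ d, a = d + 1 := ⟨a - 1, by omega⟩
  have hd : 1 ≤ d := by omega
  have hd0 : (0 : ℝ) < d := by exact_mod_cast hd
  have hV := Vmat_posSemidef hQcol hrank hp hs
  have hdet := (Dmat_posDef hrank hp).det_pos
  have htr0 : 0 ≤ (Vmat Q p).trace := hV.trace_nonneg
  set D := (Dmat Q p).det with hD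
  set m := (Vmat Q p).trace / d with hm
  have hm0 : 0 ≤ m := by positivity
  push_cast
  rw [add_sub_cancel_right]
  set r := Real.exp (-(1 / (d : ℝ)) * Real.log D) with hr
  have hr0 : 0 < r := Real.exp_pos _
  have hrd : r ^ d * D = 1 := by
    rw [hr, ← Real.exp_nat_mul]
    have : (d : ℝ) * (-(1 / (d : ℝ)) * Real.log D) = - Real.log D := by field_simp
    rw [this, Real.exp_neg, Real.exp_log hdet, inv_mul_cancel₀ hdet.ne']
  -- AM–GM for the eigenvalues of `V + c · 𝟙𝟙ᵀ`, whose determinant is known.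
  have key : ∀ c : ℝ, 0 ≤ c → c * ((d : ℝ) + 1) ^ 2 ≤
      D * (((Vmat Q p).trace + c * (d + 1)) / (d + 1)) ^ (d + 1) := by
    intro c hc
    have h1 := det_Vmat_add hQcol hrank hp hs c
    push_cast at h1
    rw [← h1]
    refine mul_le_mul_of_nonneg_left ?_ hdet.le
    have hps : (Vmat Q p + c • Matrix.vecMulVec (1 : Fin (d + 1) → ℝ) 1).PosSemidef := by
      refine hV.add (Matrix.PosSemidef.smul ?_ hc)
      have := Matrix.posSemidef_vecMulVec_self_star (R := ℝ) (1 : Fin (d + 1) → ℝ)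
      simpa using this
    have := det_le_trace_div_pow (Nat.succ_pos d) hps
    refine this.trans_eq ?_
    congr 2
    · rw [Matrix.trace_add, Matrix.trace_smul, Matrix.trace_vecMulVec]
      simp [dotProduct]
    · push_cast; ring
  -- This `c` makes the eigenvalue on the kernel `ℝ𝟙` of `V` equal to the mean `m` of the others,
  -- which is the optimal choice.
  have h2 := key (m / (d + 1)) (by positivity)
  have e1 : ((Vmat Q p).trace + m / (d + 1) * (d + 1)) / (d + 1) = m := by
    rw [hm]; field_simp
  rw [e1] at h2
  have hmpos : 0 < m := by
    rcases hm0.eq_or_lt with h | h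
    · exfalso
      have ht : (Vmat Q p).trace = 0 := by
        rw [hm] at h; field_simp at h; linarith
      -- With zero trace, any small enough `c > 0` contradicts `key`.
      have h3 := key (1 / (D + 1)) (by positivity)
      rw [ht, zero_add, mul_div_cancel_right₀ _ (by positivity), pow_succ _ d, ← mul_assoc,
        mul_comm (1 / (D + 1)) (((d : ℝ) + 1) ^ 2)] at h3
      have hc : 0 < 1 / (D + 1) := by positivity
      have h4 := le_of_mul_le_mul_right h3 hc
      have hc1 : 1 / (D + 1) ≤ 1 := by rw [div_le_one (by positivity)]; linarith
      have h5 : (1 / (D + 1)) ^ d ≤ 1 / (D + 1) := pow_le_of_le_one hc.le hc1 (by omega)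
      have h6 : D * (1 / (D + 1)) ^ d ≤ D * (1 / (D + 1)) := by gcongr
      have h7 : D * (1 / (D + 1)) < 1 := by
        rw [mul_one_div, div_lt_one (by positivity)]; linarith
      nlinarith
    · exact h
  have h3 : (d : ℝ) + 1 ≤ D * m ^ d := by
    have : m * ((d : ℝ) + 1) ≤ m * (D * m ^ d) := by
      calc m * ((d : ℝ) + 1) = m / (d + 1) * (d + 1) ^ 2 := by field_simp
        _ ≤ _ := h2
        _ = _ := by ring
    exact le_of_mul_le_mul_left this hmpos
  have h4 : ((((d : ℝ) + 1) / d) * r) ^ d ≤ m ^ d := by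
    rw [mul_pow]
    calc _ ≤ ((d : ℝ) + 1) * r ^ d := by gcongr; exact one_add_inv_pow_le d hd
      _ ≤ (D * m ^ d) * r ^ d := by gcongr
      _ = (r ^ d * D) * m ^ d := by ring
      _ = m ^ d := by rw [hrd, one_mul]
  have h5 := le_of_pow_le_pow_left₀ (by omega) hm0 h4
  rw [hm] at h5
  field_simp at h5
  linarith

end LinAlg

/-! ### The affine chart of the simplex -/

/-- The `j`-th coordinate tangent vector `e_j - e_a` of the chart `emb`. -/
def tang (a : ℕ) (j : Fin (a - 1)) : Fin a → ℝ :=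
  fun x => if h : (x : ℕ) < a - 1 then (Pi.single j 1 : Fin (a - 1) → ℝ) ⟨x.1, h⟩ else -1

/-- The inclusion of the index set of the chart into that of the ambient space. -/
def inc (a : ℕ) (j : Fin (a - 1)) : Fin a := ⟨j.1, lt_of_lt_of_le j.2 (Nat.sub_le a 1)⟩

lemma emb_add_smul_single (a : ℕ) (q : Fin (a - 1) → ℝ) (j : Fin (a - 1)) (t : ℝ) :
    emb a (q + t • Pi.single j 1) = emb a q + t • tang a j := by
  ext x
  simp only [emb, tang, Pi.add_apply, Pi.smul_apply, smul_eq_mul]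
  split_ifs with h
  · rfl
  · rw [Finset.sum_add_distrib, ← Finset.mul_sum, Finset.sum_pi_single']
    simp; ring

lemma sum_emb {a : ℕ} (ha : 2 ≤ a) (q : Fin (a - 1) → ℝ) : ∑ x, emb a q x = 1 := by
  obtain ⟨d, rfl⟩ : ∃ d, a = d + 1 := ⟨a - 1, by omega⟩
  rw [Fin.sum_univ_castSucc]
  simp [emb]

/-- The coordinate tangent vectors span the vectors of coordinate sum zero. -/
lemma sum_smul_tang {a : ℕ} (ha : 2 ≤ a) (v : Fin a → ℝ) (hv : ∑ x, v x = 0) :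
    ∑ j, v (inc a j) • tang a j = v := by
  obtain ⟨d, rfl⟩ : ∃ d, a = d + 1 := ⟨a - 1, by omega⟩
  rw [Fin.sum_univ_castSucc] at hv
  ext x
  rw [Finset.sum_apply]
  refine Fin.lastCases ?_ (fun i => ?_) x
  · simp only [tang, Pi.smul_apply, smul_eq_mul]
    have : ∑ j : Fin (d + 1 - 1), v (inc (d + 1) j) = ∑ j : Fin d, v j.castSucc := rfl
    simp only [Fin.val_last, Nat.add_sub_cancel, lt_irrefl, dite_false, mul_neg, mul_one,
      Finset.sum_neg_distrib]
    rw [this]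
    linarith
  · have : ∀ j : Fin (d + 1 - 1), (v (inc (d + 1) j) • tang (d + 1) j) i.castSucc
        = if i = j then v (inc (d + 1) j) else 0 := by
      intro j
      simp only [tang, Pi.smul_apply, smul_eq_mul, Fin.val_castSucc]
      rw [dif_pos (by simpa using i.2)]
      change v _ * (Pi.single j 1 : Fin d → ℝ) i = _
      rw [Pi.single_apply]
      simp
    simp only [this]
    rw [Finset.sum_ite_eq]
    simp [inc]
    rfl

lemma emb_mem_simplex {a : ℕ} (ha : 2 ≤ a) {q : Fin (a - 1) → ℝ} (hq : q ∈ stdCorner (a - 1)) :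
    emb a q ∈ simplex a := by
  refine ⟨fun x => ?_, sum_emb ha q⟩
  unfold emb
  split_ifs with h
  · exact hq.1 _
  · linarith [hq.2]

lemma contDiff_emb (a : ℕ) : ContDiff ℝ 1 (emb a) := by
  rw [contDiff_pi]
  intro x
  unfold emb
  split_ifs with h
  · fun_prop
  · fun_prop

lemma isCompact_stdCorner (m : ℕ) : IsCompact (stdCorner m) := by
  refine (isCompact_Icc (a := (0 : Fin m → ℝ)) (b := 1)).of_isClosed_subset ?_ ?_
  · have : stdCorner m = (⋂ i, {q : Fin m → ℝ | 0 ≤ q i}) ∩ {q | ∑ i, q i ≤ 1} := by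
      ext q; simp [stdCorner]
    rw [this]
    refine (isClosed_iInter fun i => isClosed_le (by fun_prop) (by fun_prop)).inter
      (isClosed_le (by fun_prop) (by fun_prop))
  · intro q hq
    refine ⟨fun i => hq.1 i, fun i => ?_⟩
    exact (Finset.single_le_sum (f := q) (fun i _ => hq.1 i) (Finset.mem_univ i)).trans hq.2

lemma convex_stdCorner (m : ℕ) : Convex ℝ (stdCorner m) := by
  intro x hx y hy s t hs ht hst
  refine ⟨fun i => ?_, ?_⟩
  · have := hx.1 i
    have := hy.1 i
    simp only [Pi.add_apply, Pi.smul_apply, smul_eq_mul]; positivity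
  · simp only [Pi.add_apply, Pi.smul_apply, smul_eq_mul, Finset.sum_add_distrib,
      ← Finset.mul_sum]
    nlinarith [hx.2, hy.2]

lemma isCompact_simplex (a : ℕ) : IsCompact (simplex a) := isCompact_stdSimplex ℝ (Fin a)

lemma mulVec_pos_of_mem_simplex {a b : ℕ} {Q : Matrix (Fin b) (Fin a) ℝ}
    (hQpos : ∀ y x, 0 < Q y x) {p : Fin a → ℝ} (hp : p ∈ simplex a) (y : Fin b) :
    0 < (Q *ᵥ p) y := by
  change 0 < ∑ x, Q y x * p x
  refine Finset.sum_pos' (fun x _ => mul_nonneg (hQpos y x).le (hp.1 x)) ?_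
  by_contra! h
  have : ∀ x, p x = 0 := fun x => by
    have := h x (Finset.mem_univ x)
    exact le_antisymm (by nlinarith [hQpos y x]) (hp.1 x)
  have h2 := hp.2
  simp [this] at h2

/-! ### Regularity of the likelihood and of the inverse information matrix -/

lemma contDiff_lik {a b n : ℕ} (Q : Matrix (Fin b) (Fin a) ℝ) (y : Fin n → Fin b) :
    ContDiff ℝ 1 (lik Q y) := by
  unfold lik Matrix.mulVec dotProduct
  fun_prop

lemma sum_mulVec {a b : ℕ} {Q : Matrix (Fin b) (Fin a) ℝ} (hQcol : ∀ x, ∑ y, Q y x = 1)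
    (v : Fin a → ℝ) : ∑ y, (Q *ᵥ v) y = ∑ x, v x := by
  simp only [Matrix.mulVec, dotProduct]
  rw [Finset.sum_comm]
  simp [← Finset.sum_mul, hQcol]

/-- Logarithmic derivative of the likelihood along a coordinate direction of the chart. -/
lemma fderiv_lik_emb {a b n : ℕ} (Q : Matrix (Fin b) (Fin a) ℝ) (y : Fin n → Fin b)
    (q : Fin (a - 1) → ℝ) (hq : ∀ z, 0 < (Q *ᵥ emb a q) z) (j : Fin (a - 1)) :
    fderiv ℝ (fun q => lik Q y (emb a q)) q (Pi.single j 1) =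
      lik Q y (emb a q) * ∑ i, (Q *ᵥ tang a j) (y i) / (Q *ᵥ emb a q) (y i) := by
  have hd : DifferentiableAt ℝ (fun q => lik Q y (emb a q)) q :=
    ((contDiff_lik Q y).comp (contDiff_emb a)).differentiable one_ne_zero q
  rw [← hd.lineDeriv_eq_fderiv, lineDeriv]
  have h1 : ∀ t : ℝ, lik Q y (emb a (q + t • Pi.single j 1)) =
      ∏ i, ((Q *ᵥ emb a q) (y i) + t * (Q *ᵥ tang a j) (y i)) := by
    intro t
    rw [emb_add_smul_single, lik]
    simp [Matrix.mulVec_add, Matrix.mulVec_smul]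
  simp only [h1]
  have h2 : HasDerivAt (fun t : ℝ => ∏ i, ((Q *ᵥ emb a q) (y i) + t * (Q *ᵥ tang a j) (y i)))
      (∑ i, (∏ k ∈ Finset.univ.erase i, ((Q *ᵥ emb a q) (y k) + 0 * (Q *ᵥ tang a j) (y k))) •
        (Q *ᵥ tang a j) (y i)) 0 := by
    refine HasDerivAt.fun_finsetProd fun i _ => ?_
    simpa using ((hasDerivAt_id (0 : ℝ)).mul_const ((Q *ᵥ tang a j) (y i))).const_add
      ((Q *ᵥ emb a q) (y i))
  rw [h2.deriv, lik, Finset.mul_sum]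
  refine Finset.sum_congr rfl fun i _ => ?_
  rw [← Finset.mul_prod_erase Finset.univ _ (Finset.mem_univ i)]
  have := (hq (y i)).ne'
  simp only [zero_mul, add_zero, smul_eq_mul]
  field_simp

lemma contDiffAt_det {E : Type*} [NormedAddCommGroup E] [NormedSpace ℝ E] {m : ℕ}
    {A : E → Matrix (Fin m) (Fin m) ℝ} {e : E}
    (h : ∀ i j, ContDiffAt ℝ 1 (fun e => A e i j) e) : ContDiffAt ℝ 1 (fun e => (A e).det) e := by
  simp only [Matrix.det_apply']
  refine ContDiffAt.sum fun σ _ => contDiffAt_const.mul (contDiffAt_prod fun i _ => h _ _)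

lemma contDiffAt_Vmat {a b : ℕ} {Q : Matrix (Fin b) (Fin a) ℝ} (hrank : Q.rank = a)
    {p : Fin a → ℝ} (hp : ∀ y, 0 < (Q *ᵥ p) y) (x x' : Fin a) :
    ContDiffAt ℝ 1 (fun p => Vmat Q p x x') p := by
  have hD : ∀ i j, ContDiffAt ℝ 1 (fun p => Dmat Q p i j) p := by
    intro i j
    have : (fun p => Dmat Q p i j) = fun p => ∑ y, Q y i * ((Q *ᵥ p) y)⁻¹ * Q y j := by
      ext p
      rw [Dmat, Matrix.mul_apply]
      simp only [Matrix.mul_diagonal, Matrix.transpose_apply]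
    rw [this]
    refine ContDiffAt.sum fun y _ => ?_
    have h : ContDiffAt ℝ 1 (fun p : Fin a → ℝ => (Q *ᵥ p) y) p := by
      unfold Matrix.mulVec dotProduct
      fun_prop
    exact (contDiffAt_const.mul (h.inv (hp y).ne')).mul contDiffAt_const
  have hdet := contDiffAt_det hD
  have hadj : ContDiffAt ℝ 1 (fun p => (Dmat Q p).adjugate x x') p := by
    simp only [Matrix.adjugate_apply]
    refine contDiffAt_det fun i j => ?_
    simp only [Matrix.updateRow_apply]
    split_ifs
    · exact contDiffAt_const
    · exact hD i j
  have : (fun p => Vmat Q p x x') =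
      fun p => ((Dmat Q p).det)⁻¹ * (Dmat Q p).adjugate x x' - p x * p x' := by
    ext p
    simp [Vmat, Matrix.inv_def, Matrix.vecMulVec_apply]
  rw [this]
  refine ((hdet.inv (Dmat_posDef hrank hp).det_pos.ne').mul hadj).sub ?_
  fun_prop

lemma continuousOn_Vmat {a b : ℕ} {Q : Matrix (Fin b) (Fin a) ℝ} (hQpos : ∀ y x, 0 < Q y x)
    (hrank : Q.rank = a) (x x' : Fin a) : ContinuousOn (fun p => Vmat Q p x x') (simplex a) :=
  fun _ hp => (contDiffAt_Vmat hrank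
    (mulVec_pos_of_mem_simplex hQpos hp) x x').continuousAt.continuousWithinAt

lemma continuousOn_trace_Vmat {a b : ℕ} {Q : Matrix (Fin b) (Fin a) ℝ}
    (hQpos : ∀ y x, 0 < Q y x) (hrank : Q.rank = a) :
    ContinuousOn (fun p => (Vmat Q p).trace) (simplex a) := by
  simp only [Matrix.trace, Matrix.diag]
  exact continuousOn_finsetSum _ fun x _ => continuousOn_Vmat hQpos hrank x x

/-! ### The prior in the chart -/

section Prior
variable {a : ℕ} {μ : Measure (Fin a → ℝ)} [IsProbabilityMeasure μ]
  {f : (Fin (a - 1) → ℝ) → ℝ}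

lemma ae_mem_simplex (ha : 2 ≤ a) (hf : IsContDensity μ f) : ∀ᵐ p ∂μ, p ∈ simplex a := by
  have hm : MeasurableSet (simplex a) := (isCompact_simplex a).isClosed.measurableSet
  have h := hf.2.2.2 ((simplex a)ᶜ.indicator 1) (measurable_one.indicator hm.compl)
    ⟨1, fun p => by by_cases h : p ∈ (simplex a)ᶜ <;> simp [h]⟩
  rw [integral_indicator_one hm.compl] at h
  have h2 : ∫ q in stdCorner (a - 1), (simplex a)ᶜ.indicator 1 (emb a q) * f q = 0 := by
    refine setIntegral_eq_zero_of_forall_eq_zero fun q hq => ?_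
    simp [emb_mem_simplex ha hq]
  rw [h2, measureReal_eq_zero_iff] at h
  exact h

lemma integrable_of_continuousOn (ha : 2 ≤ a) (hf : IsContDensity μ f) {g : (Fin a → ℝ) → ℝ}
    (hg : ContinuousOn g (simplex a)) : Integrable g μ := by
  have := hg.integrableOn_compact (μ := μ) (isCompact_simplex a)
  rwa [IntegrableOn, Measure.restrict_eq_self_of_ae_mem (ae_mem_simplex ha hf)] at this

/-- The density formula extends from bounded measurable functions to those that are merely
continuous on the simplex, because `μ` does not charge its complement. -/
lemma integral_eq_chart (ha : 2 ≤ a) (hf : IsContDensity μ f) {g : (Fin a → ℝ) → ℝ}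
    (hg : ContinuousOn g (simplex a)) :
    ∫ p, g p ∂μ = ∫ q in stdCorner (a - 1), g (emb a q) * f q := by
  classical
  have hm : MeasurableSet (simplex a) := (isCompact_simplex a).isClosed.measurableSet
  have hms : Measurable ((simplex a).piecewise g 0) :=
    hg.measurable_piecewise continuousOn_const hm
  obtain ⟨C, hC⟩ := (isCompact_simplex a).exists_bound_of_continuousOn hg
  have h := hf.2.2.2 _ hms ⟨max C 0, fun p => by
    by_cases h : p ∈ simplex a
    · simp only [Set.piecewise_eq_of_mem _ _ _ h]
      exact (hC p h).trans (le_max_left _ _)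
    · simp [Set.piecewise_eq_of_notMem _ _ _ h]⟩
  have e1 : ∫ p, g p ∂μ = ∫ p, (simplex a).piecewise g 0 p ∂μ := by
    refine integral_congr_ae ?_
    filter_upwards [ae_mem_simplex ha hf] with p hp
    rw [Set.piecewise_eq_of_mem _ _ _ hp]
  rw [e1, h]
  refine setIntegral_congr_fun (isCompact_stdCorner _).isClosed.measurableSet fun q hq => ?_
  simp only [Set.piecewise_eq_of_mem _ _ _ (emb_mem_simplex ha hq)]

end Prior

/-! ### Smooth approximation of the density from below -/

/-- A continuous density on the corner can be approximated, in `L¹` against a continuous weight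
`h`, by a `C¹` function which is supported in the interior of the corner, dominated by the density in
absolute value, and on whose support the density is bounded away from zero. -/
lemma exists_smooth_minorant {m : ℕ} (hm : 1 ≤ m) {f h : (Fin m → ℝ) → ℝ}
    (hfc : ContinuousOn f (stdCorner m)) (hf0 : ∀ q, 0 ≤ f q)
    (hhc : ContinuousOn h (stdCorner m)) {η : ℝ} (hη : 0 < η) :
    ∃ ε > 0, ∃ φ : (Fin m → ℝ) → ℝ, ContDiff ℝ 1 φ ∧ tsupport φ ⊆ interior (stdCorner m) ∧
      (∀ q ∈ tsupport φ, ε ≤ f q) ∧ (∀ q, |φ q| ≤ f q) ∧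
      ∫ q in stdCorner m, f q * h q ≤ (∫ q in stdCorner m, φ q * h q) + η := by
  set Δ := stdCorner m with hΔ
  have hcomp : IsCompact Δ := isCompact_stdCorner m
  have hmeas : MeasurableSet Δ := hcomp.isClosed.measurableSet
  have hne : (Δᶜ).Nonempty := by
    refine ⟨fun _ => -1, fun hq => ?_⟩
    have := hq.1 ⟨0, by omega⟩
    norm_num at this
  -- Truncation of `f` that is continuous on the whole space and vanishes off the interior.
  let u : ℕ → (Fin m → ℝ) → ℝ := fun k q => min (f q) (k * Metric.infDist q Δᶜ)
  have hu0 : ∀ k q, 0 ≤ u k q := fun k q =>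
    le_min (hf0 q) (mul_nonneg (Nat.cast_nonneg _) Metric.infDist_nonneg)
  have huf : ∀ k q, u k q ≤ f q := fun k q => min_le_left _ _
  have hzero : ∀ q, q ∉ interior Δ → Metric.infDist q Δᶜ = 0 := by
    intro q hq
    refine Metric.infDist_zero_of_mem_closure ?_
    rwa [closure_compl]
  have huc : ∀ k, Continuous (u k) := by
    intro k
    rw [continuous_iff_continuousAt]
    intro q
    have hc2 : Continuous fun q => (k : ℝ) * Metric.infDist q Δᶜ :=
      continuous_const.mul (Metric.continuous_infDist_pt _)
    by_cases hq : q ∈ interior Δ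
    · exact (hfc.continuousAt (mem_interior_iff_mem_nhds.1 hq)).min hc2.continuousAt
    · have huq : u k q = 0 := by
        simp only [u, hzero q hq, mul_zero]
        exact min_eq_right (hf0 q)
      rw [ContinuousAt, huq]
      have h2 : Tendsto (fun q => (k : ℝ) * Metric.infDist q Δᶜ) (nhds q) (nhds 0) := by
        have := hc2.tendsto q
        rwa [hzero q hq, mul_zero] at this
      exact tendsto_of_tendsto_of_tendsto_of_le_of_le tendsto_const_nhds h2
        (fun q => hu0 k q) (fun q => min_le_right _ _)
  have hlim : Tendsto (fun k => ∫ q in Δ, u k q * h q) atTop (nhds (∫ q in Δ, f q * h q)) := by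
    refine tendsto_integral_of_dominated_convergence (fun q => f q * |h q|) ?_ ?_ ?_ ?_
    · intro k
      exact ((huc k).continuousOn.mul hhc).aestronglyMeasurable hmeas
    · exact (hfc.mul hhc.abs).integrableOn_compact hcomp
    · intro k
      refine Eventually.of_forall fun q => ?_
      rw [norm_mul, Real.norm_eq_abs, Real.norm_eq_abs, abs_of_nonneg (hu0 k q)]
      exact mul_le_mul_of_nonneg_right (huf k q) (abs_nonneg _)
    · have hfr : ∀ᵐ q ∂(volume.restrict Δ), q ∉ frontier Δ := by
        refine ae_restrict_of_ae ?_
        exact measure_eq_zero_iff_ae_notMem.1 ((convex_stdCorner m).addHaar_frontier volume)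
      filter_upwards [hfr, ae_restrict_mem hmeas] with q hq hqΔ
      have hqi : q ∈ interior Δ := by
        by_contra hcon
        exact hq ⟨subset_closure hqΔ, hcon⟩
      have hpos : 0 < Metric.infDist q Δᶜ := by
        rw [← Metric.infDist_pos_iff_notMem_closure hne, closure_compl]
        exact fun hcon => hcon hqi
      obtain ⟨K, hK⟩ := exists_nat_ge (f q / Metric.infDist q Δᶜ)
      refine tendsto_const_nhds.congr' ?_
      filter_upwards [eventually_ge_atTop K] with k hk
      have : f q ≤ k * Metric.infDist q Δᶜ := by
        rw [← div_le_iff₀ hpos]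
        exact hK.trans (by exact_mod_cast hk)
      simp only [u, min_eq_left this]
  obtain ⟨k, hk⟩ := (hlim.eventually (lt_mem_nhds (show (∫ q in Δ, f q * h q) - η / 2 <
    ∫ q in Δ, f q * h q by linarith))).exists
  set H := ∫ q in Δ, |h q| with hH
  have hH0 : 0 ≤ H := integral_nonneg fun q => abs_nonneg _
  let ε := η / (4 * (H + 1))
  have hε : 0 < ε := by positivity
  -- Subtracting `ε` before smoothing keeps the approximation below `f` and its support in
  -- `{ε ≤ u k}`.
  obtain ⟨φ, hφc, hφa, hφs⟩ := Continuous.exists_contDiff_approx (f := fun q => max (u k q - ε) 0)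
    (ε := fun _ => ε) 1
    (((huc k).sub continuous_const).max continuous_const) continuous_const (fun _ => hε)
  have hcase : ∀ q, (ε < u k q ∧ |φ q - (u k q - ε)| < ε) ∨ (u k q ≤ ε ∧ φ q = 0) := by
    intro q
    have ha := hφa q
    rw [Real.dist_eq] at ha
    rcases lt_or_ge ε (u k q) with hq | hq
    · left
      rw [max_eq_left (by linarith)] at ha
      exact ⟨hq, ha⟩
    · right
      refine ⟨hq, ?_⟩
      by_contra hcon
      have := hφs (Function.mem_support.2 hcon)
      rw [Function.mem_support] at this
      exact this (max_eq_right (by linarith))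
  have hts : tsupport φ ⊆ {q | ε ≤ u k q} := by
    refine closure_minimal ?_ (isClosed_le continuous_const (huc k))
    intro q hq
    rcases hcase q with h1 | h1
    · exact h1.1.le
    · exact absurd h1.2 hq
  refine ⟨ε, hε, φ, hφc, ?_, ?_, ?_, ?_⟩
  · intro q hq
    by_contra hcon
    have h1 : ε ≤ u k q := hts hq
    have h2 : u k q ≤ k * Metric.infDist q Δᶜ := min_le_right _ _
    rw [hzero q hcon, mul_zero] at h2
    linarith
  · intro q hq
    exact (hts hq).trans (huf k q)
  · intro q
    rcases hcase q with h1 | h1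
    · have := abs_lt.1 h1.2
      rw [abs_le]
      have := huf k q
      constructor <;> linarith
    · rw [h1.2, abs_zero]; exact hf0 q
  · have hi1 : IntegrableOn (fun q => u k q * h q) Δ :=
      ((huc k).continuousOn.mul hhc).integrableOn_compact hcomp
    have hi2 : IntegrableOn (fun q => φ q * h q) Δ :=
      (hφc.continuous.continuousOn.mul hhc).integrableOn_compact hcomp
    have hi3 : IntegrableOn (fun q => 2 * ε * |h q|) Δ :=
      (continuousOn_const.mul hhc.abs).integrableOn_compact hcomp
    have hle : ∫ q in Δ, u k q * h q ≤ ∫ q in Δ, (φ q * h q + 2 * ε * |h q|) := by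
      refine integral_mono hi1 (hi2.add hi3) fun q => ?_
      have h1 : |u k q - φ q| ≤ 2 * ε := by
        rw [abs_le]
        rcases hcase q with h1 | h1
        · have := abs_lt.1 h1.2
          constructor <;> linarith
        · rw [h1.2]
          have := hu0 k q
          constructor <;> linarith
      have h2 : (u k q - φ q) * h q ≤ 2 * ε * |h q| := by
        refine (le_abs_self _).trans ?_
        rw [abs_mul]
        exact mul_le_mul_of_nonneg_right h1 (abs_nonneg _)
      simp only
      linarith
    rw [integral_add hi2 hi3, integral_const_mul, ← hH] at hle
    have h3 : 2 * ε * H ≤ η / 2 := by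
      simp only [ε]
      rw [show 2 * (η / (4 * (H + 1))) * H = (η / 2) * (H / (H + 1)) by field_simp; ring]
      have : H / (H + 1) ≤ 1 := by rw [div_le_one (by positivity)]; linarith
      nlinarith
    linarith

/-! ### The van Trees inequality -/

section VanTrees
variable {a b : ℕ} {Q : Matrix (Fin b) (Fin a) ℝ} {f φ : (Fin (a - 1) → ℝ) → ℝ} {ε : ℝ}

/-- The vector field (row `x`, coordinate direction `j`) `φ · V` used in the van Trees argument. -/
def field (Q : Matrix (Fin b) (Fin a) ℝ) (φ : (Fin (a - 1) → ℝ) → ℝ) (x : Fin a)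
    (j : Fin (a - 1)) (q : Fin (a - 1) → ℝ) : ℝ :=
  φ q * Vmat Q (emb a q) x (inc a j)

/-- The divergence of the `x`-th row of `field`. -/
def fieldDiv (Q : Matrix (Fin b) (Fin a) ℝ) (φ : (Fin (a - 1) → ℝ) → ℝ) (x : Fin a)
    (q : Fin (a - 1) → ℝ) : ℝ :=
  ∑ j, fderiv ℝ (field Q φ x j) q (Pi.single j 1)

/-- The divergence of the `x`-th row of `field` times the likelihood. -/
def likDiv {n : ℕ} (Q : Matrix (Fin b) (Fin a) ℝ) (φ : (Fin (a - 1) → ℝ) → ℝ) (x : Fin a)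
    (y : Fin n → Fin b) (q : Fin (a - 1) → ℝ) : ℝ :=
  ∑ j, fderiv ℝ (fun q => field Q φ x j q * lik Q y (emb a q)) q (Pi.single j 1)

lemma tsupport_field_subset (x : Fin a) (j : Fin (a - 1)) :
    tsupport (field Q φ x j) ⊆ tsupport φ :=
  tsupport_mul_subset_left

lemma contDiff_field (ha : 2 ≤ a) (hQpos : ∀ y x, 0 < Q y x) (hrank : Q.rank = a)
    (hφ : ContDiff ℝ 1 φ) (hφs : tsupport φ ⊆ interior (stdCorner (a - 1))) (x : Fin a)
    (j : Fin (a - 1)) : ContDiff ℝ 1 (field Q φ x j) := by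
  rw [contDiff_iff_contDiffAt]
  intro q
  by_cases hq : q ∈ tsupport φ
  · have hp := mulVec_pos_of_mem_simplex hQpos (emb_mem_simplex ha (interior_subset (hφs hq)))
    exact hφ.contDiffAt.mul
      ((contDiffAt_Vmat hrank hp x (inc a j)).comp q (contDiff_emb a).contDiffAt)
  · have : field Q φ x j =ᶠ[nhds q] fun _ => 0 :=
      notMem_tsupport_iff_eventuallyEq.1 fun h => hq (tsupport_field_subset x j h)
    exact contDiffAt_const.congr_of_eventuallyEq this

lemma contDiff_lik_emb {n : ℕ} (y : Fin n → Fin b) :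
    ContDiff ℝ 1 fun q => lik Q y (emb a q) :=
  (contDiff_lik Q y).comp (contDiff_emb a)

lemma sum_lik_emb (ha : 2 ≤ a) (hQcol : ∀ x, ∑ y, Q y x = 1) (n : ℕ) (q : Fin (a - 1) → ℝ) :
    ∑ y : Fin n → Fin b, lik Q y (emb a q) = 1 := by
  unfold lik
  rw [← Fintype.sum_pow, sum_mulVec hQcol, sum_emb ha, one_pow]

lemma hasCompactSupport_of_subset (hφs : tsupport φ ⊆ interior (stdCorner (a - 1))) :
    HasCompactSupport φ :=
  (isCompact_stdCorner _).of_isClosed_subset (isClosed_tsupport _)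
    (hφs.trans interior_subset)

lemma fderiv_emb_coord (q : Fin (a - 1) → ℝ) (x : Fin a) (j : Fin (a - 1)) (t : ℝ) :
    fderiv ℝ (fun q => emb a q x - t) q (Pi.single j 1) = tang a j x := by
  have hd : DifferentiableAt ℝ (fun q => emb a q x - t) q := by
    have := (contDiff_pi.1 (contDiff_emb a) x).differentiable one_ne_zero q
    exact this.sub_const t
  rw [← hd.lineDeriv_eq_fderiv, lineDeriv]
  simp only [emb_add_smul_single]
  have : HasDerivAt (fun s : ℝ => (emb a q + s • tang a j) x - t) (tang a j x) 0 := by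
    simpa using (((hasDerivAt_id (0 : ℝ)).mul_const (tang a j x)).const_add (emb a q x)).sub_const t
  exact this.deriv

/-- Integration by parts in the chart for one row of the field and one observation vector. -/
lemma integral_mul_likDiv (ha : 2 ≤ a) (hQpos : ∀ y x, 0 < Q y x) (hrank : Q.rank = a)
    (hφ : ContDiff ℝ 1 φ) (hφs : tsupport φ ⊆ interior (stdCorner (a - 1)))
    {n : ℕ} (x : Fin a) (y : Fin n → Fin b) (t : ℝ) :
    ∫ q, (emb a q x - t) * likDiv Q φ x y q =
      -∫ q, ∑ j, tang a j x * (field Q φ x j q * lik Q y (emb a q)) := by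
  have hcs : ∀ j, HasCompactSupport fun q => field Q φ x j q * lik Q y (emb a q) := fun j =>
    (hasCompactSupport_of_subset hφs).mono' fun q hq =>
      tsupport_field_subset x j (subset_closure (left_ne_zero_of_mul hq))
  have hcd : ∀ j, ContDiff ℝ 1 fun q => field Q φ x j q * lik Q y (emb a q) := fun j =>
    (contDiff_field ha hQpos hrank hφ hφs x j).mul (contDiff_lik_emb y)
  have hFc : ContDiff ℝ 1 fun q => emb a q x - t :=
    (contDiff_pi.1 (contDiff_emb a) x).sub contDiff_const
  have hI1 : ∀ j, Integrable (fun q => (emb a q x - t) *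
      fderiv ℝ (fun q => field Q φ x j q * lik Q y (emb a q)) q (Pi.single j 1)) := fun j =>
    (hFc.continuous.mul (((hcd j).continuous_fderiv one_ne_zero).clm_apply
      continuous_const)).integrable_of_hasCompactSupport (((hcs j).fderiv_apply (𝕜 := ℝ) _).mul_left)
  have hI2 : ∀ j, Integrable (fun q => tang a j x * (field Q φ x j q * lik Q y (emb a q))) :=
    fun j => (continuous_const.mul (hcd j).continuous).integrable_of_hasCompactSupport
      ((hcs j).mul_left)
  have key : ∀ j, ∫ q, (emb a q x - t) *
      fderiv ℝ (fun q => field Q φ x j q * lik Q y (emb a q)) q (Pi.single j 1) =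
      -∫ q, tang a j x * (field Q φ x j q * lik Q y (emb a q)) := by
    intro j
    have := integral_mul_fderiv_eq_neg_fderiv_mul_of_integrable (μ := volume)
      (f := fun q => emb a q x - t) (g := fun q => field Q φ x j q * lik Q y (emb a q))
      (v := Pi.single j 1) (by simpa only [fderiv_emb_coord] using hI2 j) (hI1 j)
      ((hFc.continuous.mul (hcd j).continuous).integrable_of_hasCompactSupport (hcs j).mul_left)
      (fun q _ => hFc.differentiable one_ne_zero q)
      (fun q _ => (hcd j).differentiable one_ne_zero q)
    simpa only [fderiv_emb_coord] using this
  simp only [likDiv, Finset.mul_sum]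
  rw [integral_finsetSum _ fun j _ => hI1 j, integral_finsetSum _ fun j _ => hI2 j,
    ← Finset.sum_neg_distrib]
  exact Finset.sum_congr rfl fun j _ => key j

lemma likDiv_eq_zero {n : ℕ} {x : Fin a} {y : Fin n → Fin b} {q : Fin (a - 1) → ℝ}
    (hq : q ∉ tsupport φ) : likDiv Q φ x y q = 0 := by
  refine Finset.sum_eq_zero fun j _ => ?_
  rw [fderiv_of_notMem_tsupport ℝ (fun h => hq
    (tsupport_field_subset x j (tsupport_mul_subset_left h)))]
  rfl

lemma continuous_fieldDiv (ha : 2 ≤ a) (hQpos : ∀ y x, 0 < Q y x) (hrank : Q.rank = a)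
    (hφ : ContDiff ℝ 1 φ) (hφs : tsupport φ ⊆ interior (stdCorner (a - 1))) (x : Fin a) :
    Continuous (fieldDiv Q φ x) :=
  continuous_finsetSum _ fun j _ =>
    ((contDiff_field ha hQpos hrank hφ hφs x j).continuous_fderiv one_ne_zero).clm_apply
      continuous_const

lemma continuous_likDiv (ha : 2 ≤ a) (hQpos : ∀ y x, 0 < Q y x) (hrank : Q.rank = a)
    (hφ : ContDiff ℝ 1 φ) (hφs : tsupport φ ⊆ interior (stdCorner (a - 1))) {n : ℕ} (x : Fin a)
    (y : Fin n → Fin b) : Continuous (likDiv Q φ x y) :=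
  continuous_finsetSum _ fun j _ =>
    (((contDiff_field ha hQpos hrank hφ hφs x j).mul (contDiff_lik_emb y)).continuous_fderiv
      one_ne_zero).clm_apply continuous_const

/-- Product rule: the divergence splits into the divergence of the field and the score of the
sample in the direction of row `x` of `φ · V`. -/
lemma likDiv_eq (ha : 2 ≤ a) (hQpos : ∀ y x, 0 < Q y x) (hQcol : ∀ x, ∑ y, Q y x = 1)
    (hrank : Q.rank = a)
    (hφ : ContDiff ℝ 1 φ) (hφs : tsupport φ ⊆ interior (stdCorner (a - 1))) {n : ℕ} (x : Fin a)
    (y : Fin n → Fin b) {q : Fin (a - 1) → ℝ} (hq : q ∈ stdCorner (a - 1)) :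
    likDiv Q φ x y q = lik Q y (emb a q) * (fieldDiv Q φ x q +
      ∑ i, φ q * ((Q *ᵥ Vmat Q (emb a q) x) (y i) / (Q *ᵥ emb a q) (y i))) := by
  have hp := mulVec_pos_of_mem_simplex hQpos (emb_mem_simplex ha hq)
  have h1 : ∀ j, fderiv ℝ (fun q => field Q φ x j q * lik Q y (emb a q)) q (Pi.single j 1) =
      lik Q y (emb a q) * fderiv ℝ (field Q φ x j) q (Pi.single j 1) +
      field Q φ x j q * (lik Q y (emb a q) *
        ∑ i, (Q *ᵥ tang a j) (y i) / (Q *ᵥ emb a q) (y i)) := by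
    intro j
    rw [← fderiv_lik_emb Q y q hp j, fderiv_fun_mul
      ((contDiff_field ha hQpos hrank hφ hφs x j).differentiable one_ne_zero q)
      ((contDiff_lik_emb y).differentiable one_ne_zero q)]
    simp only [ContinuousLinearMap.add_apply, ContinuousLinearMap.smul_apply, smul_eq_mul]
    ring
  have h2 : Q *ᵥ Vmat Q (emb a q) x
      = ∑ j, Vmat Q (emb a q) x (inc a j) • (Q *ᵥ tang a j) := by
    conv_lhs => rw [← sum_smul_tang ha _ (Vmat_row_sum hQcol hrank hp (sum_emb ha q) x)]
    rw [Matrix.mulVec_sum]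
    simp only [Matrix.mulVec_smul]
  simp only [likDiv, h1, Finset.sum_add_distrib, ← Finset.mul_sum, fieldDiv, mul_add]
  congr 1
  rw [h2]
  simp only [Finset.sum_apply, Pi.smul_apply, smul_eq_mul, Finset.sum_div, Finset.mul_sum, field]
  rw [Finset.sum_comm]
  exact Finset.sum_congr rfl fun i _ => Finset.sum_congr rfl fun j _ => by ring

/-- The pointwise inequality behind van Trees: weighted AM–GM together with the second moment of
the score. -/
lemma pointwise_bound (ha : 2 ≤ a) (hQpos : ∀ y x, 0 < Q y x) (hQcol : ∀ x, ∑ y, Q y x = 1)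
    (hrank : Q.rank = a) (hf0 : ∀ q, 0 ≤ f q) (hε : 0 < ε)
    (hφ : ContDiff ℝ 1 φ) (hφs : tsupport φ ⊆ interior (stdCorner (a - 1)))
    (hφε : ∀ q ∈ tsupport φ, ε ≤ f q) (hφf : ∀ q, |φ q| ≤ f q) {n : ℕ} (hn : 1 ≤ n) (x : Fin a)
    (T : (Fin n → Fin b) → ℝ) {q : Fin (a - 1) → ℝ} (hq : q ∈ stdCorner (a - 1)) :
    ∑ y, -2 * ((emb a q x - T y) * likDiv Q φ x y q) ≤
      n * ∑ y, (emb a q x - T y) ^ 2 * lik Q y (emb a q) * f q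
        + (f q * Vmat Q (emb a q) x x + (1 / (n * ε)) * fieldDiv Q φ x q ^ 2) := by
  have hpm := emb_mem_simplex ha hq
  have hp := mulVec_pos_of_mem_simplex hQpos hpm
  have hs := sum_emb ha q
  have hn0 : (0 : ℝ) < n := by exact_mod_cast hn
  have hlik : ∀ y : Fin n → Fin b, 0 ≤ lik Q y (emb a q) := fun y =>
    Finset.prod_nonneg fun i _ => (hp _).le
  have hV : 0 ≤ Vmat Q (emb a q) x x := (Vmat_posSemidef hQcol hrank hp hs).diag_nonneg
  by_cases hsup : q ∈ tsupport φ
  · have hfε := hφε q hsup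
    have hfpos : 0 < f q := hε.trans_le hfε
    set g : Fin b → ℝ := fun z => φ q * ((Q *ᵥ Vmat Q (emb a q) x) z / (Q *ᵥ emb a q) z) with hg
    have hmom := sum_prod_mul_add_sum_sq (fun z => (Q *ᵥ emb a q) z) g
      (by rw [sum_mulVec hQcol, hs]) (by
        have : ∀ z, (Q *ᵥ emb a q) z * g z = φ q * (Q *ᵥ Vmat Q (emb a q) x) z := fun z => by
          have := (hp z).ne'
          simp only [hg]; field_simp
        simp only [this, ← Finset.mul_sum]
        rw [sum_mulVec hQcol, Vmat_row_sum hQcol hrank hp hs, mul_zero]) n (fieldDiv Q φ x q)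
    have hvar : ∑ z, (Q *ᵥ emb a q) z * g z ^ 2 = φ q ^ 2 * Vmat Q (emb a q) x x := by
      rw [← sum_score_sq hQcol hrank hp hs x, Finset.mul_sum]
      exact Finset.sum_congr rfl fun z _ => by simp only [hg]; ring
    rw [hvar] at hmom
    have h1 : ∀ y : Fin n → Fin b, -2 * ((emb a q x - T y) * likDiv Q φ x y q) ≤
        n * ((emb a q x - T y) ^ 2 * lik Q y (emb a q) * f q) + (1 / (n * f q)) *
          ((∏ i, (Q *ᵥ emb a q) (y i)) * (fieldDiv Q φ x q + ∑ i, g (y i)) ^ 2) := by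
      intro y
      rw [likDiv_eq ha hQpos hQcol hrank hφ hφs x y hq]
      set B := fieldDiv Q φ x q + ∑ i, g (y i) with hB
      change -2 * ((emb a q x - T y) * (lik Q y (emb a q) * B)) ≤ _ + (1 / (n * f q)) *
        (lik Q y (emb a q) * B ^ 2)
      have h3 : n * ((emb a q x - T y) ^ 2 * lik Q y (emb a q) * f q) + (1 / (n * f q)) *
          (lik Q y (emb a q) * B ^ 2) - -2 * ((emb a q x - T y) * (lik Q y (emb a q) * B))
          = lik Q y (emb a q) * (n * f q * (emb a q x - T y) + B) ^ 2 / (n * f q) := by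
        field_simp; ring
      have h4 : 0 ≤ lik Q y (emb a q) * (n * f q * (emb a q x - T y) + B) ^ 2 / (n * f q) := by
        have := hlik y
        positivity
      linarith
    refine (Finset.sum_le_sum fun y _ => h1 y).trans ?_
    rw [Finset.sum_add_distrib, ← Finset.mul_sum, ← Finset.mul_sum, hmom]
    refine add_le_add le_rfl ?_
    have h5 : (1 / (n * f q)) * (fieldDiv Q φ x q ^ 2 + n * (φ q ^ 2 * Vmat Q (emb a q) x x))
        = φ q ^ 2 / f q * Vmat Q (emb a q) x x + (1 / (n * f q)) * fieldDiv Q φ x q ^ 2 := by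
      field_simp; ring
    rw [h5]
    have h6 : φ q ^ 2 / f q ≤ f q := by
      rw [div_le_iff₀ hfpos, ← sq]
      exact sq_le_sq' (by linarith [(abs_le.1 (hφf q)).1]) (abs_le.1 (hφf q)).2
    gcongr
  · simp only [likDiv_eq_zero hsup, mul_zero, Finset.sum_const_zero]
    have h1 : 0 ≤ ∑ y, (emb a q x - T y) ^ 2 * lik Q y (emb a q) * f q :=
      Finset.sum_nonneg fun y _ => mul_nonneg (mul_nonneg (sq_nonneg _) (hlik y)) (hf0 q)
    have := hf0 q
    positivity

/-- Summed over coordinates and observations, the integrations by parts produce the total mass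
of `φ · tr V`. -/
lemma sum_integral_likDiv (ha : 2 ≤ a) (hQpos : ∀ y x, 0 < Q y x) (hQcol : ∀ x, ∑ y, Q y x = 1)
    (hrank : Q.rank = a)
    (hφ : ContDiff ℝ 1 φ) (hφs : tsupport φ ⊆ interior (stdCorner (a - 1))) {n : ℕ}
    (T : (Fin n → Fin b) → Fin a → ℝ) :
    ∑ x, ∑ y, ∫ q in stdCorner (a - 1), (emb a q x - T y x) * likDiv Q φ x y q =
      -∫ q in stdCorner (a - 1), φ q * (Vmat Q (emb a q)).trace := by
  have hI : ∀ x (y : Fin n → Fin b), Integrable (fun q =>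
      ∑ j, tang a j x * (field Q φ x j q * lik Q y (emb a q))) := by
    intro x y
    refine integrable_finsetSum _ fun j _ => ?_
    refine Continuous.integrable_of_hasCompactSupport ?_ ?_
    · exact continuous_const.mul ((contDiff_field ha hQpos hrank hφ hφs x j).mul
        (contDiff_lik_emb y)).continuous
    · refine (hasCompactSupport_of_subset hφs).mono' fun q hq => ?_
      exact tsupport_field_subset x j
        (subset_closure (left_ne_zero_of_mul (right_ne_zero_of_mul hq)))
  have h1 : ∀ x y, ∫ q in stdCorner (a - 1), (emb a q x - T y x) * likDiv Q φ x y q =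
      -∫ q, ∑ j, tang a j x * (field Q φ x j q * lik Q y (emb a q)) := by
    intro x y
    rw [← integral_mul_likDiv ha hQpos hrank hφ hφs x y (T y x)]
    refine setIntegral_eq_integral_of_forall_compl_eq_zero fun q hq => ?_
    rw [likDiv_eq_zero (fun h => hq (interior_subset (hφs h))), mul_zero]
  simp only [h1, Finset.sum_neg_distrib]
  congr 1
  have h2 : ∀ x, ∑ y : Fin n → Fin b, ∫ q, ∑ j, tang a j x *
      (field Q φ x j q * lik Q y (emb a q)) =
      ∫ q, ∑ y : Fin n → Fin b, ∑ j, tang a j x * (field Q φ x j q * lik Q y (emb a q)) := by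
    intro x
    rw [integral_finsetSum _ fun y _ => hI x y]
  simp only [h2]
  rw [← integral_finsetSum _ fun x _ => integrable_finsetSum _ fun y _ => hI x y]
  rw [setIntegral_eq_integral_of_forall_compl_eq_zero fun q hq => by
    rw [image_eq_zero_of_notMem_tsupport (fun h => hq (interior_subset (hφs h))), zero_mul]]
  refine integral_congr_ae (Eventually.of_forall fun q => ?_)
  simp only
  rw [Matrix.trace, Finset.mul_sum]
  refine Finset.sum_congr rfl fun x _ => ?_
  have h3 : ∀ y : Fin n → Fin b, ∑ j, tang a j x * (field Q φ x j q * lik Q y (emb a q))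
      = (∑ j, tang a j x * field Q φ x j q) * lik Q y (emb a q) := by
    intro y
    rw [Finset.sum_mul]
    exact Finset.sum_congr rfl fun j _ => by ring
  simp only [h3]
  rw [← Finset.mul_sum, sum_lik_emb ha hQcol, mul_one]
  by_cases hq : q ∈ tsupport φ
  · have hp := mulVec_pos_of_mem_simplex hQpos (emb_mem_simplex ha (interior_subset (hφs hq)))
    have h4 := congrFun (sum_smul_tang ha _ (Vmat_row_sum hQcol hrank hp (sum_emb ha q) x)) x
    rw [Matrix.diag, ← h4, Finset.sum_apply, Finset.mul_sum]
    refine Finset.sum_congr rfl fun j _ => ?_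
    simp only [field, Pi.smul_apply, smul_eq_mul]; ring
  · have h0 := image_eq_zero_of_notMem_tsupport hq
    simp [field, h0]

lemma MSEdistr_eq_chart (ha : 2 ≤ a) {μ : Measure (Fin a → ℝ)} [IsProbabilityMeasure μ]
    (hf : IsContDensity μ f) {n : ℕ} (T : (Fin n → Fin b) → Fin a → ℝ) :
    MSEdistr Q μ T = ∑ x, ∑ y, ∫ q in stdCorner (a - 1),
      (emb a q x - T y x) ^ 2 * lik Q y (emb a q) * f q := by
  unfold MSEdistr
  rw [Finset.sum_comm]
  refine Finset.sum_congr rfl fun y _ => ?_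
  have hl := (contDiff_lik Q y).continuous
  rw [integral_eq_chart ha hf (by fun_prop)]
  simp only [Finset.sum_mul]
  refine integral_finsetSum _ fun x _ => ?_
  have he := (contDiff_emb a).continuous
  refine ContinuousOn.integrableOn_compact (isCompact_stdCorner _)
    (ContinuousOn.mul (Continuous.continuousOn ?_) hf.1)
  exact (((continuous_pi_iff.1 he x).sub continuous_const).pow 2).mul (hl.comp he)

/-- The van Trees inequality, for an arbitrary estimator, with an error term of order `1/n`. -/
lemma vanTrees (ha : 2 ≤ a) (hQpos : ∀ y x, 0 < Q y x) (hQcol : ∀ x, ∑ y, Q y x = 1)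
    (hrank : Q.rank = a) {μ : Measure (Fin a → ℝ)} [IsProbabilityMeasure μ]
    (hf : IsContDensity μ f) (hε : 0 < ε)
    (hφ : ContDiff ℝ 1 φ) (hφs : tsupport φ ⊆ interior (stdCorner (a - 1)))
    (hφε : ∀ q ∈ tsupport φ, ε ≤ f q) (hφf : ∀ q, |φ q| ≤ f q) {n : ℕ} (hn : 1 ≤ n)
    (T : (Fin n → Fin b) → Fin a → ℝ) :
    2 * (∫ q in stdCorner (a - 1), φ q * (Vmat Q (emb a q)).trace) ≤
      n * MSEdistr Q μ T + (∫ q in stdCorner (a - 1), f q * (Vmat Q (emb a q)).trace)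
        + (1 / n) * ((1 / ε) * ∑ x, ∫ q in stdCorner (a - 1), fieldDiv Q φ x q ^ 2) := by
  have hc := isCompact_stdCorner (a - 1)
  have he := (contDiff_emb a).continuous
  have hVc : ∀ x, ContinuousOn (fun q => Vmat Q (emb a q) x x) (stdCorner (a - 1)) := fun x =>
    (continuousOn_Vmat hQpos hrank x x).comp he.continuousOn fun q hq => emb_mem_simplex ha hq
  have iA : ∀ x y, IntegrableOn (fun q => (emb a q x - T y x) * likDiv Q φ x y q)
      (stdCorner (a - 1)) := fun x y =>
    (((continuous_pi_iff.1 he x).sub continuous_const).mul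
      (continuous_likDiv ha hQpos hrank hφ hφs x y)).continuousOn.integrableOn_compact hc
  have iB : ∀ x (y : Fin n → Fin b), IntegrableOn
      (fun q => (emb a q x - T y x) ^ 2 * lik Q y (emb a q) * f q) (stdCorner (a - 1)) :=
    fun x y => ContinuousOn.integrableOn_compact hc
      (((((continuous_pi_iff.1 he x).sub continuous_const).pow 2).mul
        (contDiff_lik_emb y).continuous).continuousOn.mul hf.1)
  have iC : ∀ x, IntegrableOn (fun q => f q * Vmat Q (emb a q) x x) (stdCorner (a - 1)) :=
    fun x => (hf.1.mul (hVc x)).integrableOn_compact hc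
  have iD : ∀ x, IntegrableOn (fun q => (1 / (n * ε)) * fieldDiv Q φ x q ^ 2)
      (stdCorner (a - 1)) := fun x =>
    (continuous_const.mul
      ((continuous_fieldDiv ha hQpos hrank hφ hφs x).pow 2)).continuousOn.integrableOn_compact hc
  have iCD : ∀ x, IntegrableOn (fun q => f q * Vmat Q (emb a q) x x +
      (1 / (n * ε)) * fieldDiv Q φ x q ^ 2) (stdCorner (a - 1)) := fun x => (iC x).add (iD x)
  have iBs : ∀ x, IntegrableOn (fun q => n * ∑ y : Fin n → Fin b,
      (emb a q x - T y x) ^ 2 * lik Q y (emb a q) * f q) (stdCorner (a - 1)) := fun x =>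
    (integrable_finsetSum _ fun y _ => iB x y).const_mul _
  have hx : ∀ x, ∑ y, -2 * ∫ q in stdCorner (a - 1), (emb a q x - T y x) * likDiv Q φ x y q ≤
      n * (∑ y, ∫ q in stdCorner (a - 1), (emb a q x - T y x) ^ 2 * lik Q y (emb a q) * f q)
      + ((∫ q in stdCorner (a - 1), f q * Vmat Q (emb a q) x x) +
        (1 / (n * ε)) * ∫ q in stdCorner (a - 1), fieldDiv Q φ x q ^ 2) := by
    intro x
    simp only [← integral_const_mul]
    rw [← integral_finsetSum _ fun y _ => (iA x y).const_mul (-2),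
      ← integral_finsetSum _ fun y _ => iB x y, ← integral_const_mul,
      ← integral_add (iC x) (iD x), ← integral_add (iBs x) (iCD x)]
    refine setIntegral_mono_on (integrable_finsetSum _ fun y _ => (iA x y).const_mul (-2))
      ((iBs x).add (iCD x)) hc.isClosed.measurableSet fun q hq => ?_
    exact pointwise_bound ha hQpos hQcol hrank hf.2.1 hε hφ hφs hφε hφf hn x (fun y => T y x) hq
  have hsum := Finset.sum_le_sum fun x (_ : x ∈ Finset.univ) => hx x
  simp only [← Finset.mul_sum, Finset.sum_add_distrib] at hsum
  rw [sum_integral_likDiv ha hQpos hQcol hrank hφ hφs T, ← MSEdistr_eq_chart ha hf T,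
    ← integral_finsetSum _ fun x _ => iC x] at hsum
  simp only [← Finset.mul_sum] at hsum
  have hn0 : (n : ℝ) ≠ 0 := by positivity
  have e : (1 / (n * ε)) = (1 / (n : ℝ)) * (1 / ε) := by field_simp
  rw [e, mul_assoc] at hsum
  simp only [Matrix.trace, Matrix.diag] at hsum ⊢
  linarith

end VanTrees

/-! ### Boundedness of the rescaled risk -/

section Upper
variable {a b : ℕ} {Q : Matrix (Fin b) (Fin a) ℝ} {f : (Fin (a - 1) → ℝ) → ℝ}
  {μ : Measure (Fin a → ℝ)} [IsProbabilityMeasure μ]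

lemma exists_left_inverse (hrank : Q.rank = a) : ∃ R : Matrix (Fin a) (Fin b) ℝ, R * Q = 1 := by
  have hinj : Function.Injective Q.mulVecLin := mulVec_injective_of_rank hrank
  obtain ⟨g, hg⟩ := Q.mulVecLin.exists_leftInverse_of_injective (LinearMap.ker_eq_bot.2 hinj)
  refine ⟨LinearMap.toMatrix' g, ?_⟩
  have h := congrArg LinearMap.toMatrix' hg
  rwa [LinearMap.toMatrix'_comp, LinearMap.toMatrix'_id, ← Matrix.toLin'_apply',
    LinearMap.toMatrix'_toLin'] at h

/-- The posterior mean has the smallest mean squared error among all estimators. -/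
lemma MSEdistr_PiOpt_le (ha : 2 ≤ a) (hQpos : ∀ y x, 0 < Q y x) (hf : IsContDensity μ f)
    {n : ℕ} (T : (Fin n → Fin b) → Fin a → ℝ) :
    MSEdistr (n := n) Q μ (PiOpt Q μ) ≤ MSEdistr Q μ T := by
  unfold MSEdistr
  refine Finset.sum_le_sum fun y _ => ?_
  have hl := (contDiff_lik Q y).continuous
  have i0 : Integrable (fun p => lik Q y p) μ :=
    integrable_of_continuousOn ha hf hl.continuousOn
  have i1 : ∀ x, Integrable (fun p => p x * lik Q y p) μ := fun x =>
    integrable_of_continuousOn ha hf (by fun_prop)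
  have i2 : ∀ x, Integrable (fun p => p x ^ 2 * lik Q y p) μ := fun x =>
    integrable_of_continuousOn ha hf (by fun_prop)
  have hexp : ∀ t : Fin a → ℝ, ∫ p, (∑ x, (p x - t x) ^ 2) * lik Q y p ∂μ =
      ∑ x, ((∫ p, p x ^ 2 * lik Q y p ∂μ) - 2 * t x * (∫ p, p x * lik Q y p ∂μ)
        + t x ^ 2 * ∫ p, lik Q y p ∂μ) := by
    intro t
    simp only [Finset.sum_mul]
    rw [integral_finsetSum _ fun x _ => integrable_of_continuousOn ha hf (by fun_prop)]
    refine Finset.sum_congr rfl fun x _ => ?_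
    have i3 : Integrable (fun p => p x ^ 2 * lik Q y p - 2 * t x * (p x * lik Q y p)) μ :=
      (i2 x).sub ((i1 x).const_mul _)
    rw [← integral_const_mul, ← integral_const_mul,
      ← integral_sub (i2 x) ((i1 x).const_mul _), ← integral_add i3 (i0.const_mul _)]
    refine integral_congr_ae (Eventually.of_forall fun p => ?_)
    simp only
    ring
  rw [hexp, hexp]
  refine Finset.sum_le_sum fun x _ => ?_
  have hlik : ∀ p ∈ simplex a, 0 ≤ lik Q y p := fun p hp =>
    Finset.prod_nonneg fun i _ => (mulVec_pos_of_mem_simplex hQpos hp _).le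
  have hm0 : 0 ≤ ∫ p, lik Q y p ∂μ :=
    integral_nonneg_of_ae ((ae_mem_simplex ha hf).mono hlik)
  have hm1 : 0 ≤ ∫ p, p x * lik Q y p ∂μ :=
    integral_nonneg_of_ae ((ae_mem_simplex ha hf).mono fun p hp =>
      mul_nonneg (hp.1 x) (hlik p hp))
  have hm01 : ∫ p, p x * lik Q y p ∂μ ≤ ∫ p, lik Q y p ∂μ := by
    refine integral_mono_ae (i1 x) i0 ((ae_mem_simplex ha hf).mono fun p hp => ?_)
    have : p x ≤ 1 := hp.2 ▸ Finset.single_le_sum (fun i _ => hp.1 i) (Finset.mem_univ x)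
    exact mul_le_of_le_one_left (hlik p hp) this
  simp only [PiOpt]
  set m0 := ∫ p, lik Q y p ∂μ
  set m1 := ∫ p, p x * lik Q y p ∂μ
  rcases hm0.eq_or_lt with h | h
  · have : m1 = 0 := le_antisymm (h ▸ hm01) hm1
    simp [← h, this]
  · have h3 : T y x ^ 2 * m0 - 2 * T y x * m1 - ((m1 / m0) ^ 2 * m0 - 2 * (m1 / m0) * m1)
        = m0 * (T y x - m1 / m0) ^ 2 := by
      field_simp; ring
    have h4 : 0 ≤ m0 * (T y x - m1 / m0) ^ 2 := by positivity
    linarith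

/-- Comparison with the unbiased estimator obtained by averaging a left inverse of `Q` over the
observations, whose risk is exactly of order `1 / n`. -/
lemma exists_bound_MSEdistr (ha : 2 ≤ a) (hQpos : ∀ y x, 0 < Q y x)
    (hQcol : ∀ x, ∑ y, Q y x = 1) (hrank : Q.rank = a) (hf : IsContDensity μ f) :
    ∃ C : ℝ, ∀ n : ℕ, 1 ≤ n → (n : ℝ) * MSEdistr (n := n) Q μ (PiOpt Q μ) ≤ C := by
  obtain ⟨R, hR⟩ := exists_left_inverse hrank
  refine ⟨∫ p, ∑ x, ∑ z, (Q *ᵥ p) z * (R x z - p x) ^ 2 ∂μ, fun n hn => ?_⟩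
  have hn0 : (0 : ℝ) < n := by exact_mod_cast hn
  refine (mul_le_mul_of_nonneg_left (MSEdistr_PiOpt_le ha hQpos hf
    fun (y : Fin n → Fin b) x => (1 / (n : ℝ)) * ∑ i, R x (y i)) hn0.le).trans ?_
  unfold MSEdistr
  rw [← integral_finsetSum, ← integral_const_mul]
  · refine (integral_congr_ae ((ae_mem_simplex ha hf).mono fun p hp => ?_)).le
    simp only [Finset.sum_mul]
    rw [Finset.sum_comm, Finset.mul_sum]
    refine Finset.sum_congr rfl fun x _ => ?_
    have hr : ∑ z, (Q *ᵥ p) z = 1 := by rw [sum_mulVec hQcol, hp.2]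
    have hRp : ∑ z, (Q *ᵥ p) z * R x z = p x := by
      have h1 : R *ᵥ (Q *ᵥ p) = p := by rw [Matrix.mulVec_mulVec, hR, Matrix.one_mulVec]
      calc ∑ z, (Q *ᵥ p) z * R x z = (R *ᵥ (Q *ᵥ p)) x :=
            Finset.sum_congr rfl fun z _ => mul_comm _ _
        _ = p x := by rw [h1]
    have hmom := sum_prod_mul_add_sum_sq (fun z => (Q *ᵥ p) z) (fun z => R x z - p x) hr
      (by simp only [mul_sub, Finset.sum_sub_distrib, ← Finset.sum_mul, hr, hRp]; ring) n 0
    have h2 : ∀ y : Fin n → Fin b, (p x - (1 / (n : ℝ)) * ∑ i, R x (y i)) ^ 2 * lik Q y p =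
        (1 / (n : ℝ) ^ 2) * ((∏ i, (Q *ᵥ p) (y i)) * (0 + ∑ i, (R x (y i) - p x)) ^ 2) := by
      intro y
      simp only [lik, Finset.sum_sub_distrib, Finset.sum_const, Finset.card_univ,
        Fintype.card_fin, nsmul_eq_mul]
      field_simp
      ring
    simp only [h2]
    rw [← Finset.mul_sum, hmom]
    field_simp
    ring
  · intro y _
    have hl := (contDiff_lik Q y).continuous
    exact integrable_of_continuousOn ha hf (by fun_prop)

end Upper

/-! ### The limiting risk and its entropy bound -/

/-- Jensen's inequality for `exp`, via the tangent line at the mean, applied to the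
determinant–trace inequality. -/
lemma gamma_bound_le_integral_trace {a b : ℕ} (ha : 2 ≤ a) {Q : Matrix (Fin b) (Fin a) ℝ}
    (hQpos : ∀ y x, 0 < Q y x) (hQcol : ∀ x, ∑ y, Q y x = 1)
    {μ : Measure (Fin a → ℝ)} [IsProbabilityMeasure μ] (hrank : Q.rank = a)
    {f : (Fin (a - 1) → ℝ) → ℝ} (hf : IsContDensity μ f)
    (hint : Integrable (fun p => Real.log (Dmat Q p).det) μ) :
    (a : ℝ) / (2 * π * Real.exp 1) * Real.exp ((2 / ((a : ℝ) - 1)) * gammaMu Q μ) ≤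
      ∫ p, (Vmat Q p).trace ∂μ := by
  have ha1 : (0 : ℝ) < (a : ℝ) - 1 := by
    have : (2 : ℝ) ≤ a := by exact_mod_cast ha
    linarith
  set I := ∫ p, Real.log (Dmat Q p).det ∂μ with hI
  set c := -(1 / ((a : ℝ) - 1)) * I with hc
  have hpos : 0 < 2 * π * Real.exp 1 := by positivity
  have h1 : (2 / ((a : ℝ) - 1)) * gammaMu Q μ = Real.log (2 * π * Real.exp 1) + c := by
    unfold gammaMu
    rw [← hI, hc]
    field_simp
    ring
  have h2 : (a : ℝ) / (2 * π * Real.exp 1) * Real.exp ((2 / ((a : ℝ) - 1)) * gammaMu Q μ)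
      = a * Real.exp c := by
    rw [h1, Real.exp_add, Real.exp_log hpos]
    field_simp
  rw [h2]
  have i1 : Integrable (fun p => (a : ℝ) * (Real.exp c *
      (1 - c + -(1 / ((a : ℝ) - 1)) * Real.log (Dmat Q p).det))) μ :=
    (((integrable_const _).add (hint.const_mul _)).const_mul _).const_mul _
  have h3 : ∫ p, (a : ℝ) * (Real.exp c *
      (1 - c + -(1 / ((a : ℝ) - 1)) * Real.log (Dmat Q p).det)) ∂μ = a * Real.exp c := by
    rw [integral_const_mul, integral_const_mul, integral_add (integrable_const _)
      (hint.const_mul _), integral_const_mul, ← hI, ← hc]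
    simp
  rw [← h3]
  refine integral_mono_ae i1
    (integrable_of_continuousOn ha hf (continuousOn_trace_Vmat hQpos hrank))
    ((ae_mem_simplex ha hf).mono fun p hp => ?_)
  refine le_trans ?_ (trace_Vmat_ge ha hQcol hrank (mulVec_pos_of_mem_simplex hQpos hp) hp.2)
  refine mul_le_mul_of_nonneg_left ?_ (Nat.cast_nonneg a)
  set t := -(1 / ((a : ℝ) - 1)) * Real.log (Dmat Q p).det
  have h4 := Real.add_one_le_exp (t - c)
  calc Real.exp c * (1 - c + t) ≤ Real.exp c * Real.exp (t - c) := by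
        refine mul_le_mul_of_nonneg_left ?_ (Real.exp_pos c).le
        linarith
    _ = Real.exp t := by rw [← Real.exp_add]; ring_nf

/-- Asymptotically no sequence of estimators beats the averaged Cramér–Rao bound. -/
lemma eventually_integral_trace_le {a b : ℕ} (ha : 2 ≤ a) {Q : Matrix (Fin b) (Fin a) ℝ}
    (hQpos : ∀ y x, 0 < Q y x) (hQcol : ∀ x, ∑ y, Q y x = 1)
    {μ : Measure (Fin a → ℝ)} [IsProbabilityMeasure μ] (hrank : Q.rank = a)
    {f : (Fin (a - 1) → ℝ) → ℝ} (hf : IsContDensity μ f)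
    (T : ∀ n : ℕ, (Fin n → Fin b) → Fin a → ℝ) {η : ℝ} (hη : 0 < η) :
    ∀ᶠ n : ℕ in atTop, (∫ p, (Vmat Q p).trace ∂μ) - 3 * η ≤ n * MSEdistr Q μ (T n) := by
  have hhc : ContinuousOn (fun q => (Vmat Q (emb a q)).trace) (stdCorner (a - 1)) :=
    (continuousOn_trace_Vmat hQpos hrank).comp (contDiff_emb a).continuous.continuousOn
      fun q hq => emb_mem_simplex ha hq
  obtain ⟨ε, hε, φ, hφ, hφs, hφε, hφf, hφη⟩ :=
    exists_smooth_minorant (by omega) hf.1 hf.2.1 hhc hη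
  have hchart : ∫ p, (Vmat Q p).trace ∂μ =
      ∫ q in stdCorner (a - 1), f q * (Vmat Q (emb a q)).trace := by
    rw [integral_eq_chart ha hf (continuousOn_trace_Vmat hQpos hrank)]
    simp only [mul_comm]
  have hlim : Tendsto (fun n : ℕ => (1 / (n : ℝ)) *
      ((1 / ε) * ∑ x, ∫ q in stdCorner (a - 1), fieldDiv Q φ x q ^ 2)) atTop (nhds 0) := by
    simpa using tendsto_one_div_atTop_nhds_zero_nat.mul_const
      ((1 / ε) * ∑ x, ∫ q in stdCorner (a - 1), fieldDiv Q φ x q ^ 2)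
  filter_upwards [hlim.eventually (gt_mem_nhds hη), eventually_ge_atTop 1] with n hn hn1
  have := vanTrees ha hQpos hQcol hrank hf hε hφ hφs hφε hφf hn1 (T n)
  rw [hchart]
  linarith

/-- asymptotic lower bound on `n · MSE^distr` in terms of
`γ_μ(Q)`. -/
theorem liminf_MSEdistr_ge_gamma_bound {a b : ℕ} (ha : 2 ≤ a) (hb : 2 ≤ b)
    (Q : Matrix (Fin b) (Fin a) ℝ)
    (hQpos : ∀ y x, 0 < Q y x) (hQcol : ∀ x, ∑ y, Q y x = 1)
    (μ : Measure (Fin a → ℝ)) [IsProbabilityMeasure μ]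
    (hrank : Q.rank = a)
    (f : (Fin (a - 1) → ℝ) → ℝ) (hf : IsContDensity μ f)
    (hint : Integrable (fun p => Real.log (Dmat Q p).det) μ) :
    (a : ℝ) / (2 * π * Real.exp 1) * Real.exp ((2 / ((a : ℝ) - 1)) * gammaMu Q μ) ≤
      Filter.liminf (fun n : ℕ => (n : ℝ) * MSEdistr (n := n) Q μ (PiOpt Q μ))
        Filter.atTop := by
  refine (gamma_bound_le_integral_trace ha hQpos hQcol hrank hf hint).trans ?_
  obtain ⟨C, hC⟩ := exists_bound_MSEdistr ha hQpos hQcol hrank hf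
  -- In `ℝ` the `liminf` is meaningful only because the sequence is bounded above.
  have hcob : IsCoboundedUnder (· ≥ ·) atTop
      (fun n : ℕ => (n : ℝ) * MSEdistr (n := n) Q μ (PiOpt Q μ)) :=
    IsBoundedUnder.isCoboundedUnder_ge ⟨C, by
      rw [eventually_map]
      exact (eventually_ge_atTop 1).mono hC⟩
  refine le_of_forall_pos_le_add fun η hη => ?_
  have h := le_liminf_of_le hcob (eventually_integral_trace_le ha hQpos hQcol hrank hf
    (fun n => PiOpt (n := n) Q μ) (div_pos hη three_pos))
  linarith

end
end

section
/- Let ε > 0 and let Q be a privacy protocol satisfying ε-LDP all of whose entries are positive. Then for every p in the simplex 𝒫 one has log det G_p ≥ −b·ε + Σ_{y=1}^b log((Qp)_y), where G_p = Σ_{x=1}^a p_x E_x with E_x = diag(w_x) − w_x w_xᵀ and w_x = (Q_{1|x},…,Q_{b−1|x})ᵀ. -/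
/-! Write `q = Qp` and `E_q = diag q - q qᵀ`, with the last coordinate of `q` removed. By `ε`-LDP,
`Q_{y|x} ≥ e^{-ε} q_y` for all `x` and `y`. The quadratic form of `E_x` at `v` is the variance of
`(v, 0)` under `Q_{·|x}`; since a variance is a minimum of mean square deviations, it is monotone
in the weights, whence `E_x ≥ e^{-ε} E_q` in the Loewner order (`posSemidef_sub_smul`). Averaging
over `p` gives `G_p ≥ e^{-ε} E_q`. The determinant is monotone (`det_le_det_add`), and
`det E_q = ∏ y, q_y` (`det_diagonal_sub_vecMulVec`), so `det G_p ≥ e^{-(b-1)ε} ∏ y, q_y`, which is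
slightly stronger than the claim. -/

open MeasureTheory Matrix Finset Filter Real

noncomputable section

/-- A real matrix `1 + P` with `P` positive semidefinite has determinant at least `1`, since its
eigenvalues are `1 + λ` with `λ ≥ 0`. -/
lemma one_le_det_one_add {n : Type*} [Fintype n] [DecidableEq n] {P : Matrix n n ℝ}
    (hP : P.PosSemidef) : 1 ≤ (1 + P).det := by
  -- `(-1)^n det (1 + P)` is the characteristic polynomial of `P` at `-1`.
  have h1 := Matrix.eval_charpoly P (-1)
  rw [hP.1.charpoly_eq, Polynomial.eval_prod] at h1
  have h2 : (Matrix.scalar n (-1 : ℝ) - P) = -(1 + P) := by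
    rw [map_neg, map_one]; abel
  rw [h2, Matrix.det_neg] at h1
  have h3 : ∏ i, (1 + hP.1.eigenvalues i) = (1 + P).det := by
    have h4 : ∏ i, Polynomial.eval (-1 : ℝ)
        (Polynomial.X - Polynomial.C ((hP.1.eigenvalues i : ℝ))) =
        (-1) ^ Fintype.card n * ∏ i, (1 + hP.1.eigenvalues i) := by
      rw [← Finset.card_univ, ← Finset.prod_const, ← Finset.prod_mul_distrib]
      refine Finset.prod_congr rfl fun i _ => ?_
      simp only [Polynomial.eval_sub, Polynomial.eval_X, Polynomial.eval_C]
      ring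
    exact mul_left_cancel₀ (pow_ne_zero _ (by norm_num)) (h4.symm.trans h1)
  rw [← h3]
  exact Finset.one_le_prod fun i _ => by
    have := hP.eigenvalues_nonneg i
    linarith

open scoped MatrixOrder in
/-- The determinant is monotone for the Loewner order above a positive definite matrix: with
`B = CᴴC` one has `det (A + B) = det A * det (1 + C A⁻¹ Cᴴ)`. -/
lemma det_le_det_add {n : Type*} [Fintype n] [DecidableEq n] {A B : Matrix n n ℝ}
    (hA : A.PosDef) (hB : B.PosSemidef) : A.det ≤ (A + B).det := by
  obtain ⟨C, rfl⟩ : ∃ C : Matrix n n ℝ, B = Cᴴ * C :=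
    CStarAlgebra.nonneg_iff_eq_star_mul_self.mp hB.nonneg
  rw [Matrix.det_add_mul _ _ ((Matrix.isUnit_iff_isUnit_det _).mp hA.isUnit)]
  exact le_mul_of_one_le_right hA.det_pos.le
    (one_le_det_one_add (hA.posSemidef.inv.mul_mul_conjTranspose_same C))

lemma det_diagonal_sub_vecMulVec {n : Type*} [Fintype n] [DecidableEq n] (w : n → ℝ) :
    (Matrix.diagonal w - Matrix.vecMulVec w w).det = (∏ i, w i) * (1 - ∑ i, w i) := by
  have h : Matrix.diagonal w - Matrix.vecMulVec w w =
      Matrix.diagonal w * (1 + Matrix.replicateCol Unit (fun _ => (-1 : ℝ)) *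
        Matrix.replicateRow Unit w) := by
    ext i j
    rw [Matrix.diagonal_mul]
    by_cases hij : i = j
    · subst hij
      simp [Matrix.mul_apply, Matrix.vecMulVec_apply]
      ring
    · simp [Matrix.mul_apply, Matrix.vecMulVec_apply, hij]
  rw [h, Matrix.det_mul, Matrix.det_diagonal, Matrix.det_one_add_replicateCol_mul_replicateRow]
  simp [dotProduct, sub_eq_add_neg]

lemma quadForm_diagonal_sub_vecMulVec {n : Type*} [Fintype n] [DecidableEq n] (w v : n → ℝ) :
    v ⬝ᵥ ((Matrix.diagonal w - Matrix.vecMulVec w w) *ᵥ v) =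
      ∑ i, w i * v i ^ 2 - (∑ i, w i * v i) ^ 2 := by
  rw [Matrix.sub_mulVec, dotProduct_sub, Matrix.vecMulVec_mulVec]
  congr 1
  · simp only [dotProduct, Matrix.mulVec_diagonal]
    exact Finset.sum_congr rfl fun i _ => by ring
  · have h : v ⬝ᵥ w = w ⬝ᵥ v := dotProduct_comm v w
    simp only [op_smul_eq_smul, dotProduct_smul, smul_eq_mul, h]
    simp only [dotProduct]
    ring

lemma isHermitian_diagonal_sub_vecMulVec {n : Type*} [Fintype n] [DecidableEq n] (w : n → ℝ) :
    (Matrix.diagonal w - Matrix.vecMulVec w w).IsHermitian := by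
  ext i j
  by_cases hij : i = j
  · subst hij; simp
  · simp [Matrix.vecMulVec_apply, hij, Ne.symm hij, mul_comm]

/-- Comparison of variances. Here `w` and `q` are probability vectors with their last entries
`1 - ∑ w` and `1 - ∑ q` left out, and the quadratic form of `diag w - w wᵀ` at `v` is the variance
of `(v, 0)` under `w`. A variance is the minimum over `c` of the mean square deviation from `c`,
hence it is monotone in the weights. -/
lemma posSemidef_sub_smul {n : Type*} [Fintype n] [DecidableEq n] {w q : n → ℝ} {t : ℝ}
    (ht : 0 ≤ t) (hle : ∀ i, t * q i ≤ w i) (hlast : t * (1 - ∑ i, q i) ≤ 1 - ∑ i, w i) :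
    ((Matrix.diagonal w - Matrix.vecMulVec w w) -
      t • (Matrix.diagonal q - Matrix.vecMulVec q q)).PosSemidef := by
  refine .of_dotProduct_mulVec_nonneg ?_ fun v => ?_
  · exact (isHermitian_diagonal_sub_vecMulVec w).sub
      ((isHermitian_diagonal_sub_vecMulVec q).smul (IsSelfAdjoint.all t))
  rw [star_trivial, Matrix.sub_mulVec, dotProduct_sub, Matrix.smul_mulVec, dotProduct_smul,
    quadForm_diagonal_sub_vecMulVec, quadForm_diagonal_sub_vecMulVec, smul_eq_mul]
  -- `c` is the mean of `(v, 0)` under `w`.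
  obtain ⟨c, hc⟩ : ∃ c, c = ∑ i, w i * v i := ⟨_, rfl⟩
  have expand : ∀ u : n → ℝ, ∑ i, u i * (v i - c) ^ 2 =
      ∑ i, u i * v i ^ 2 - 2 * c * ∑ i, u i * v i + c ^ 2 * ∑ i, u i := by
    intro u
    rw [Finset.mul_sum, Finset.mul_sum, ← Finset.sum_sub_distrib, ← Finset.sum_add_distrib]
    exact Finset.sum_congr rfl fun i _ => by ring
  have h1 : t * ∑ i, q i * (v i - c) ^ 2 ≤ ∑ i, w i * (v i - c) ^ 2 := by
    rw [Finset.mul_sum]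
    refine Finset.sum_le_sum fun i _ => ?_
    rw [← mul_assoc]
    exact mul_le_mul_of_nonneg_right (hle i) (sq_nonneg _)
  have h2 := mul_le_mul_of_nonneg_right hlast (sq_nonneg c)
  have h3 : 0 ≤ t * (∑ i, q i * v i - c) ^ 2 := mul_nonneg ht (sq_nonneg _)
  rw [expand, expand, ← hc] at h1
  rw [← hc]
  nlinarith

/-- pointwise lower bound on `log det G_p` from `ε`-LDP. -/
theorem log_det_Gmat_ge {a b : ℕ} (ha : 2 ≤ a) (hb : 2 ≤ b)
    (ε : ℝ) (hε : 0 < ε)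
    (Q : Matrix (Fin b) (Fin a) ℝ)
    (hQpos : ∀ y x, 0 < Q y x) (hQcol : ∀ x, ∑ y, Q y x = 1)
    (hLDP : SatisfiesLDP Q ε) :
    ∀ p ∈ simplex a,
      -(b : ℝ) * ε + ∑ y, Real.log (Q.mulVec p y) ≤ Real.log (Gmat Q p).det := by
  intro p hp
  obtain ⟨hp0, hp1⟩ := hp
  obtain ⟨m, rfl⟩ : ∃ m, b = m + 1 := ⟨b - 1, by omega⟩
  have hpx : ∃ x, 0 < p x := by
    by_contra! h
    have : ∑ x, p x ≤ 0 := Finset.sum_nonpos fun x _ => h x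
    linarith
  have hq : ∀ y, (Q *ᵥ p) y = ∑ x, Q y x * p x := fun y => rfl
  have hqpos : ∀ y, 0 < (Q *ᵥ p) y := by
    intro y
    obtain ⟨x, hx⟩ := hpx
    rw [hq]
    exact Finset.sum_pos' (fun x _ => mul_nonneg (hQpos y x).le (hp0 x))
      ⟨x, Finset.mem_univ x, mul_pos (hQpos y x) hx⟩
  have hqsum : ∑ y, (Q *ᵥ p) y = 1 := by
    simp only [hq]
    rw [Finset.sum_comm]
    simp only [← Finset.sum_mul, hQcol, one_mul, hp1]
  have hqle : ∀ y x, Real.exp (-ε) * (Q *ᵥ p) y ≤ Q y x := by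
    intro y x
    have h : (Q *ᵥ p) y ≤ Real.exp ε * Q y x := by
      calc (Q *ᵥ p) y = ∑ x', Q y x' * p x' := hq y
        _ ≤ ∑ x', (Real.exp ε * Q y x) * p x' :=
            Finset.sum_le_sum fun x' _ => mul_le_mul_of_nonneg_right (hLDP x x' y) (hp0 x')
        _ = Real.exp ε * Q y x := by rw [← Finset.mul_sum, hp1, mul_one]
    calc Real.exp (-ε) * (Q *ᵥ p) y ≤ Real.exp (-ε) * (Real.exp ε * Q y x) :=
          mul_le_mul_of_nonneg_left h (Real.exp_pos _).le
      _ = Q y x := by rw [← mul_assoc, ← Real.exp_add]; simp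
  let q : Fin m → ℝ := fun i => (Q *ᵥ p) i.castSucc
  let A : Matrix (Fin m) (Fin m) ℝ := Matrix.diagonal q - Matrix.vecMulVec q q
  have hqlast : 1 - ∑ i, q i = (Q *ᵥ p) (Fin.last m) := by
    rw [← hqsum, Fin.sum_univ_castSucc]; simp [q]
  have hAdet : A.det = ∏ y, (Q *ᵥ p) y := by
    rw [det_diagonal_sub_vecMulVec, hqlast, Fin.prod_univ_castSucc]
  have hprod : 0 < ∏ y, (Q *ᵥ p) y := Finset.prod_pos fun y _ => hqpos y
  have hApsd : A.PosSemidef := by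
    -- The case `t = 0` of the comparison of variances.
    have h := posSemidef_sub_smul (w := q) (q := q) (t := 0) le_rfl
      (fun i => by rw [zero_mul]; exact (hqpos _).le)
      (by rw [zero_mul, hqlast]; exact (hqpos _).le)
    rwa [zero_smul, sub_zero] at h
  have hApd : A.PosDef := hApsd.posDef_iff_isUnit.mpr <|
    (Matrix.isUnit_iff_isUnit_det _).mpr (hAdet ▸ hprod.ne').isUnit
  -- `E_x` with its index type `Fin (m + 1 - 1)` read as `Fin m`.
  let E : Fin a → Matrix (Fin m) (Fin m) ℝ := fun x => Emat Q x
  have hE : ∀ x, (E x - Real.exp (-ε) • A).PosSemidef := by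
    intro x
    refine posSemidef_sub_smul (w := wcol Q x) (Real.exp_pos _).le (fun i => hqle _ x) ?_
    have hw : 1 - ∑ i, wcol Q x i = Q (Fin.last m) x := by
      have := hQcol x
      rw [Fin.sum_univ_castSucc] at this
      exact sub_eq_of_eq_add' this.symm
    exact (hqlast ▸ hqle (Fin.last m) x).trans_eq hw.symm
  have hG : (Gmat Q p : Matrix (Fin m) (Fin m) ℝ) = Real.exp (-ε) • A + ∑ x, p x • (E x - Real.exp (-ε) • A) := by
    simp only [smul_sub, Finset.sum_sub_distrib, ← Finset.sum_smul, hp1, one_smul]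
    rw [add_sub_cancel]
    rfl
  have hdet : Real.exp (-ε) ^ m * ∏ y, (Q *ᵥ p) y ≤ (Gmat Q p).det := by
    have h := det_le_det_add (hApd.smul (Real.exp_pos (-ε)))
      (Matrix.posSemidef_sum Finset.univ fun x _ => (hE x).smul (hp0 x))
    rw [Matrix.det_smul, hAdet, Fintype.card_fin] at h
    rw [hG]
    exact h
  have hlog := Real.log_le_log (mul_pos (pow_pos (Real.exp_pos _) _) hprod) hdet
  rw [Real.log_mul (pow_pos (Real.exp_pos _) _).ne' hprod.ne', Real.log_pow, Real.log_exp,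
    Real.log_prod fun y _ => (hqpos y).ne'] at hlog
  push_cast
  linarith

end
end

section
/- Let ε > 0, n ≥ 1, a = b = 2, and let μ be a Borel probability measure on the simplex 𝒫 ⊂ ℝ². Then the randomised response protocol RR_ε with the estimator Π_RR satisfies MSE^distr_{μ,n}(RR_ε, Π_RR) = (2/n) · ( e^ε/(e^ε−1)² + ∫_𝒫 p_1 p_2 dμ(p) ). -/
/-!
Fix `p` in the simplex. Under the likelihood `∏ i, (Qp)_{y i}` the coordinates of `y` are i.i.d., and
`Π_RR(y)_x - p_x` is the average of `n` i.i.d. centred terms. Hence the squared error in coordinate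
`x` has mean `1/n` times the variance of one term (`sum_prod_mul_sq`), and this variance is
`e^ε/(e^ε-1)² + p_0 p_1` for both `x` (`pointwise_mse`). All integrands are continuous, hence
integrable on the compact simplex, so the sum over `y` and the integral over `p` commute.
-/


open MeasureTheory Matrix Finset Filter Real

noncomputable section

/-- The randomised response protocol `RR_ε` for `a = b = 2`. -/
def RRmat (ε : ℝ) : Matrix (Fin 2) (Fin 2) ℝ :=
  Matrix.of fun y x =>
    if y = x then Real.exp ε / (Real.exp ε + 1) else 1 / (Real.exp ε + 1)

/-- The tally `s_x(y⃗) = #{i : y_i = x}` as a real number. -/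
def sTally {n : ℕ} (y : Fin n → Fin 2) (x : Fin 2) : ℝ :=
  ((Finset.univ.filter fun i => y i = x).card : ℝ)

/-- The unbiased randomised-response estimator `Π_RR = Φ_RR`. -/
def PiRR (ε : ℝ) {n : ℕ} (y : Fin n → Fin 2) : Fin 2 → ℝ :=
  fun x => ((Real.exp ε + 1) * sTally y x - n) / (n * (Real.exp ε - 1))

/-- Summing over `y : Fin (n + 1) → Fin 2` amounts to summing over the first coordinate and the
tail. -/
lemma sum_cons_split {n : ℕ} (F : (Fin (n + 1) → Fin 2) → ℝ) :
    ∑ y, F y = ∑ z : Fin 2, ∑ y : Fin n → Fin 2, F (Fin.cons z y) := by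
  rw [← (Fin.consEquiv (fun _ : Fin (n + 1) => Fin 2)).sum_comp, Fintype.sum_prod_type]
  rfl

/-- Additivity of the variance: for weights `q` of total mass `1` on `Fin 2` and a `q`-centred `d`,
the product weight has mass `1`, the sum of the `d (y i)` has mean `0`, and its second moment is `n`
times that of `d`. The three claims are proved together so that the induction closes. -/
lemma sum_prod_mul_sq (q d : Fin 2 → ℝ) (hq : q 0 + q 1 = 1)
    (hd : q 0 * d 0 + q 1 * d 1 = 0) (n : ℕ) :
    (∑ y : Fin n → Fin 2, ∏ i, q (y i) = 1) ∧
    (∑ y : Fin n → Fin 2, (∑ i, d (y i)) * ∏ i, q (y i) = 0) ∧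
    (∑ y : Fin n → Fin 2, (∑ i, d (y i)) ^ 2 * ∏ i, q (y i) =
      n * (q 0 * d 0 ^ 2 + q 1 * d 1 ^ 2)) := by
  induction n with
  | zero => simp
  | succ n ih =>
    obtain ⟨h0, h1, h2⟩ := ih
    have e0 : ∀ z, ∑ y : Fin n → Fin 2, q z * ∏ i, q (y i) = q z := by
      intro z
      rw [← Finset.mul_sum, h0, mul_one]
    have e1 : ∀ z, ∑ y : Fin n → Fin 2, (d z + ∑ i, d (y i)) * (q z * ∏ i, q (y i))
        = d z * q z := by
      intro z
      calc _ = ∑ y : Fin n → Fin 2, (d z * q z * (∏ i, q (y i))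
              + q z * ((∑ i, d (y i)) * ∏ i, q (y i))) :=
            Finset.sum_congr rfl fun y _ => by ring
        _ = _ := by
            rw [Finset.sum_add_distrib, ← Finset.mul_sum, ← Finset.mul_sum, h0, h1]
            ring
    have e2 : ∀ z, ∑ y : Fin n → Fin 2, (d z + ∑ i, d (y i)) ^ 2 * (q z * ∏ i, q (y i))
        = d z ^ 2 * q z + q z * (n * (q 0 * d 0 ^ 2 + q 1 * d 1 ^ 2)) := by
      intro z
      calc _ = ∑ y : Fin n → Fin 2, (d z ^ 2 * q z * (∏ i, q (y i))
              + 2 * d z * q z * ((∑ i, d (y i)) * ∏ i, q (y i))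
              + q z * ((∑ i, d (y i)) ^ 2 * ∏ i, q (y i))) :=
            Finset.sum_congr rfl fun y _ => by ring
        _ = _ := by
            rw [Finset.sum_add_distrib, Finset.sum_add_distrib, ← Finset.mul_sum,
              ← Finset.mul_sum, ← Finset.mul_sum, h0, h1, h2]
            ring
    refine ⟨?_, ?_, ?_⟩
    · rw [sum_cons_split]
      simp only [Fin.prod_univ_succ, Fin.cons_zero, Fin.cons_succ, e0, Fin.sum_univ_two, hq]
    · rw [sum_cons_split]
      simp only [Fin.prod_univ_succ, Fin.sum_univ_succ (n := n), Fin.cons_zero, Fin.cons_succ, e1]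
      rw [Fin.sum_univ_two]
      linarith
    · rw [sum_cons_split]
      simp only [Fin.prod_univ_succ, Fin.sum_univ_succ (n := n), Fin.cons_zero, Fin.cons_succ, e2]
      rw [Fin.sum_univ_two]
      push_cast
      linear_combination (n * (q 0 * d 0 ^ 2 + q 1 * d 1 ^ 2)) * hq

/-- The estimation error as an average of terms depending on one `y i` each. -/
lemma sub_PiRR (ε : ℝ) (hε : 0 < ε) {n : ℕ} (hn : 1 ≤ n) (c : ℝ) (x : Fin 2)
    (y : Fin n → Fin 2) :
    c - PiRR ε y x = -(1 / (n : ℝ)) *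
      ∑ i, (((Real.exp ε + 1) * (if y i = x then 1 else 0) - 1) / (Real.exp ε - 1) - c) := by
  have hE : Real.exp ε - 1 ≠ 0 := by
    have := Real.one_lt_exp_iff.mpr hε
    linarith
  have hn' : (n : ℝ) ≠ 0 := by positivity
  have hs : sTally y x = ∑ i, (if y i = x then (1 : ℝ) else 0) := by
    simp [sTally]
  rw [Finset.sum_sub_distrib, ← Finset.sum_div, Finset.sum_sub_distrib, ← Finset.mul_sum, ← hs]
  simp only [PiRR, Finset.sum_const, Finset.card_univ, Fintype.card_fin, nsmul_eq_mul]
  field_simp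
  ring

lemma RRmat_mulVec (ε : ℝ) (p : Fin 2 → ℝ) :
    (RRmat ε).mulVec p 0 = (Real.exp ε * p 0 + p 1) / (Real.exp ε + 1) ∧
    (RRmat ε).mulVec p 1 = (p 0 + Real.exp ε * p 1) / (Real.exp ε + 1) := by
  constructor <;> simp [RRmat, Matrix.mulVec, dotProduct, Fin.sum_univ_two] <;> ring

/-- The mean squared error conditional on a fixed `p` in the simplex. -/
lemma pointwise_mse (ε : ℝ) (hε : 0 < ε) {n : ℕ} (hn : 1 ≤ n) (p : Fin 2 → ℝ)
    (hp : p 0 + p 1 = 1) :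
    ∑ y : Fin n → Fin 2, (∑ x, (p x - PiRR ε y x) ^ 2) * lik (RRmat ε) y p =
      2 / (n : ℝ) * (Real.exp ε / (Real.exp ε - 1) ^ 2 + p 0 * p 1) := by
  obtain ⟨hq0, hq1⟩ := RRmat_mulVec ε p
  have hE : Real.exp ε - 1 ≠ 0 := by
    have := Real.one_lt_exp_iff.mpr hε
    linarith
  have hE1 : Real.exp ε + 1 ≠ 0 := by positivity
  have hn' : (n : ℝ) ≠ 0 := by positivity
  have hp1 : p 1 = 1 - p 0 := by linarith
  have hq : (RRmat ε).mulVec p 0 + (RRmat ε).mulVec p 1 = 1 := by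
    rw [hq0, hq1, hp1]
    field_simp
    ring
  have key : ∀ x, ∑ y : Fin n → Fin 2, (p x - PiRR ε y x) ^ 2 * lik (RRmat ε) y p =
      1 / (n : ℝ) * (Real.exp ε / (Real.exp ε - 1) ^ 2 + p 0 * p 1) := by
    intro x
    have hd : (RRmat ε).mulVec p 0 * (((Real.exp ε + 1) * (if (0 : Fin 2) = x then 1 else 0) - 1)
          / (Real.exp ε - 1) - p x)
        + (RRmat ε).mulVec p 1 * (((Real.exp ε + 1) * (if (1 : Fin 2) = x then 1 else 0) - 1)
          / (Real.exp ε - 1) - p x) = 0 := by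
      rw [hq0, hq1]
      fin_cases x <;> simp [hp1] <;> field_simp <;> ring
    have h := (sum_prod_mul_sq ((RRmat ε).mulVec p)
      (fun z => ((Real.exp ε + 1) * (if z = x then 1 else 0) - 1) / (Real.exp ε - 1) - p x)
      hq hd n).2.2
    simp only [sub_PiRR ε hε hn, lik, mul_pow, mul_assoc]
    rw [← Finset.mul_sum, h, hq0, hq1]
    fin_cases x <;> simp [hp1] <;> field_simp <;> ring
  simp only [Fin.sum_univ_two, add_mul]
  rw [Finset.sum_add_distrib, key, key]
  ring

/-- A continuous function is integrable for a probability measure carried by the (compact) simplex. -/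
lemma integrable_of_continuous_simplex (μ : Measure (Fin 2 → ℝ)) [IsProbabilityMeasure μ]
    (hμsupp : μ (simplex 2)ᶜ = 0) (f : (Fin 2 → ℝ) → ℝ) (hf : Continuous f) :
    Integrable f μ := by
  have hK : IsCompact (simplex 2) := isCompact_stdSimplex (𝕜 := ℝ) (Fin 2)
  have hr : μ.restrict (simplex 2) = μ := Measure.restrict_eq_self_of_ae_mem hμsupp
  have h := hf.continuousOn.integrableOn_compact (μ := μ) hK
  rwa [IntegrableOn, hr] at h

/-- exact distribution-estimation MSE of randomised response. -/
theorem MSEdistr_RR (ε : ℝ) (hε : 0 < ε) {n : ℕ} (hn : 1 ≤ n)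
    (μ : Measure (Fin 2 → ℝ)) [IsProbabilityMeasure μ]
    (hμsupp : μ (simplex 2)ᶜ = 0) :
    MSEdistr (n := n) (RRmat ε) μ (PiRR ε) =
      2 / (n : ℝ) * (Real.exp ε / (Real.exp ε - 1) ^ 2 + ∫ p, p 0 * p 1 ∂μ) := by
  have hint := integrable_of_continuous_simplex μ hμsupp
  have hlik : ∀ y : Fin n → Fin 2, Continuous (lik (RRmat ε) y) := by
    intro y
    unfold lik Matrix.mulVec dotProduct
    fun_prop
  have hae : ∀ᵐ p ∂μ, p ∈ simplex 2 := hμsupp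
  unfold MSEdistr
  rw [← integral_finsetSum]
  · rw [integral_congr_ae (g := fun p => 2 / (n : ℝ) *
      (Real.exp ε / (Real.exp ε - 1) ^ 2 + p 0 * p 1))]
    · rw [integral_const_mul, integral_add (integrable_const _) (hint _ (by fun_prop))]
      simp
    · filter_upwards [hae] with p hp
      exact pointwise_mse ε hε hn p (by simpa [Fin.sum_univ_two] using hp.2)
  · intro y _
    exact hint _ ((by fun_prop : Continuous fun p : Fin 2 → ℝ =>
      ∑ x, (p x - PiRR ε y x) ^ 2).mul (hlik y))

end
end

section
/- Let ε > 0, n ≥ 1, a = b = 2, and let μ be a Borel probability measure on the simplex 𝒫 ⊂ ℝ². Then the randomised response protocol RR_ε with the estimator Φ_RR = Π_RR satisfies MSE^freq_{μ,n}(RR_ε, Φ_RR) = 2e^ε / ( n·(e^ε−1)² ), for every prior μ. -/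
/-!
Given the data `x⃗`, the error of the estimator in coordinate `α` is `1/n` times the sum over `i` of
`d(x_i, y_i) = 1{x_i = α} - ((e^ε + 1) 1{y_i = α} - 1) / (e^ε - 1)`. Under randomised response the
`y_i` are independent given `x⃗`, and each `d(x_i, y_i)` has mean `0` and variance
`e^ε / (e^ε - 1)²`, whatever the values of `x_i` and `α`. Variances of independent centred variables
add (`sum_prod_moments`), so the conditional squared error, summed over the two coordinates `α`, is
the constant `2 e^ε / (n (e^ε - 1)²)` (`RR_conditional`). Averaging a constant over `x⃗` leaves it
unchanged, because the mixed weights `∫ ∏ i, p_{x_i} dμ(p)` have total mass `1`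
(`sum_integral_prod`).
-/

open MeasureTheory Matrix Finset Filter Real

noncomputable section

/-- Moments of a sum of independent centred variables with a common variance `v`, written as finite
sums: the total mass is `1`, the mean is `0` and the second moment is `n * v`. -/
lemma sum_prod_moments {β : Type*} [Fintype β] (v : ℝ) : ∀ (n : ℕ) (q d : Fin n → β → ℝ),
    (∀ i, ∑ y, q i y = 1) → (∀ i, ∑ y, q i y * d i y = 0) →
    (∀ i, ∑ y, q i y * d i y ^ 2 = v) →
    (∑ y : Fin n → β, ∏ i, q i (y i)) = 1 ∧
    (∑ y : Fin n → β, (∏ i, q i (y i)) * ∑ i, d i (y i)) = 0 ∧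
    (∑ y : Fin n → β, (∏ i, q i (y i)) * (∑ i, d i (y i)) ^ 2) = n * v := by
  intro n
  induction n with
  | zero => intro q d _ _ _; simp
  | succ n ih =>
    intro q d h0 h1 h2
    obtain ⟨i0, i1, i2⟩ := ih (fun i => q i.succ) (fun i => d i.succ)
      (fun i => h0 _) (fun i => h1 _) (fun i => h2 _)
    have split : ∀ f : (Fin (n + 1) → β) → ℝ,
        ∑ y, f y = ∑ b, ∑ y : Fin n → β, f (Fin.cons b y) := by
      intro f
      rw [← (Fin.consEquiv (fun _ : Fin (n + 1) => β)).sum_comp, Fintype.sum_prod_type]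
      rfl
    simp only [split, Fin.prod_univ_succ, Fin.sum_univ_succ, Fin.cons_zero, Fin.cons_succ]
    refine ⟨?_, ?_, ?_⟩
    · simp only [← Finset.mul_sum, i0, mul_one, h0]
    · have key : ∀ b, ∑ y : Fin n → β, (q 0 b * ∏ i, q (Fin.succ i) (y i)) *
          (d 0 b + ∑ i, d (Fin.succ i) (y i)) = q 0 b * d 0 b := by
        intro b
        calc _ = q 0 b * d 0 b * (∑ y : Fin n → β, ∏ i, q (Fin.succ i) (y i)) +
              q 0 b * ∑ y : Fin n → β, (∏ i, q (Fin.succ i) (y i)) *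
                ∑ i, d (Fin.succ i) (y i) := by
              rw [Finset.mul_sum, Finset.mul_sum, ← Finset.sum_add_distrib]
              exact Finset.sum_congr rfl fun y _ => by ring
          _ = _ := by rw [i0, i1]; ring
      simp only [key, h1]
    · have key : ∀ b, ∑ y : Fin n → β, (q 0 b * ∏ i, q (Fin.succ i) (y i)) *
          (d 0 b + ∑ i, d (Fin.succ i) (y i)) ^ 2 = q 0 b * d 0 b ^ 2 + q 0 b * (n * v) := by
        intro b
        calc _ = q 0 b * d 0 b ^ 2 * (∑ y : Fin n → β, ∏ i, q (Fin.succ i) (y i)) +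
              2 * q 0 b * d 0 b * (∑ y : Fin n → β, (∏ i, q (Fin.succ i) (y i)) *
                ∑ i, d (Fin.succ i) (y i)) +
              q 0 b * ∑ y : Fin n → β, (∏ i, q (Fin.succ i) (y i)) *
                (∑ i, d (Fin.succ i) (y i)) ^ 2 := by
              rw [Finset.mul_sum, Finset.mul_sum, Finset.mul_sum, ← Finset.sum_add_distrib,
                ← Finset.sum_add_distrib]
              exact Finset.sum_congr rfl fun y _ => by ring
          _ = _ := by rw [i0, i1, i2]; ring
      simp only [key, Finset.sum_add_distrib, h2, ← Finset.sum_mul, h0]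
      push_cast
      ring

/-- The data vector `x⃗`, with `p` drawn from `μ`, has a probability distribution of mass `1`. -/
lemma sum_integral_prod {a : ℕ} (n : ℕ) (μ : Measure (Fin a → ℝ)) [IsProbabilityMeasure μ]
    (hμ : μ (simplex a)ᶜ = 0) :
    ∑ xv : Fin n → Fin a, ∫ p, ∏ i, p (xv i) ∂μ = 1 := by
  have hae : ∀ᵐ p ∂μ, p ∈ simplex a := by
    rw [ae_iff]; exact hμ
  have hint : ∀ xv : Fin n → Fin a, Integrable (fun p : Fin a → ℝ => ∏ i, p (xv i)) μ := by
    intro xv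
    refine Integrable.of_bound (C := 1)
      (Continuous.aestronglyMeasurable (by fun_prop)) ?_
    filter_upwards [hae] with p hp
    rw [Real.norm_eq_abs, abs_of_nonneg (Finset.prod_nonneg fun i _ => hp.1 _)]
    refine Finset.prod_le_one (fun i _ => hp.1 _) fun i _ => ?_
    rw [← hp.2]
    exact Finset.single_le_sum (f := p) (fun x _ => hp.1 x) (Finset.mem_univ _)
  rw [← integral_finsetSum _ fun xv _ => hint xv]
  have h1 : ∀ᵐ p ∂μ, ∑ xv : Fin n → Fin a, ∏ i, p (xv i) = (1 : ℝ) := by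
    filter_upwards [hae] with p hp
    rw [← Fintype.prod_sum (fun (_ : Fin n) (x : Fin a) => p x)]
    simp [hp.2]
  rw [integral_congr_ae h1]
  simp

/-- Squared error of the randomised-response estimator in one coordinate, conditional on the
data. -/
lemma RR_conditional (ε : ℝ) (hε : 0 < ε) {n : ℕ} (hn : 1 ≤ n) (xv : Fin n → Fin 2) (α : Fin 2) :
    ∑ y : Fin n → Fin 2, (∏ i, RRmat ε (y i) (xv i)) * (freqVec xv α - PiRR ε y α) ^ 2 =
      Real.exp ε / ((n : ℝ) * (Real.exp ε - 1) ^ 2) := by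
  have he : 1 < Real.exp ε := Real.one_lt_exp_iff.2 hε
  have hm : Real.exp ε - 1 ≠ 0 := by linarith
  have hp : Real.exp ε + 1 ≠ 0 := by linarith
  have hn0 : (n : ℝ) ≠ 0 := by exact_mod_cast (by omega : n ≠ 0)
  set e := Real.exp ε with hedef
  let d : Fin n → Fin 2 → ℝ := fun i y =>
    (if xv i = α then 1 else 0) - ((e + 1) * (if y = α then 1 else 0) - 1) / (e - 1)
  have herr : ∀ y : Fin n → Fin 2, freqVec xv α - PiRR ε y α = (∑ i, d i (y i)) / n := by
    intro y
    simp only [freqVec, PiRR, sTally, d, Finset.sum_sub_distrib, ← Finset.sum_div,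
      ← Finset.mul_sum, Finset.sum_boole, Finset.sum_const, Finset.card_univ, Fintype.card_fin,
      nsmul_eq_mul, mul_one, ← hedef]
    field_simp
  have h := (sum_prod_moments (e / (e - 1) ^ 2) n (fun i y => RRmat ε y (xv i)) d
    ?_ ?_ ?_).2.2
  · simp only [herr, div_pow, mul_div_assoc', ← Finset.sum_div, h]
    field_simp
  all_goals
    intro i
    simp only [d, RRmat, Matrix.of_apply, ← hedef]
    generalize xv i = x
    clear_value e
    fin_cases x <;> fin_cases α <;> simp [Fin.sum_univ_two] <;> field_simp <;> ring

/-- exact frequency-estimation MSE of randomised response,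
independent of the prior `μ`. -/
theorem MSEfreq_RR (ε : ℝ) (hε : 0 < ε) {n : ℕ} (hn : 1 ≤ n)
    (μ : Measure (Fin 2 → ℝ)) [IsProbabilityMeasure μ]
    (hμsupp : μ (simplex 2)ᶜ = 0) :
    MSEfreq (n := n) (RRmat ε) μ (PiRR ε) =
      2 * Real.exp ε / ((n : ℝ) * (Real.exp ε - 1) ^ 2) := by
  have hw : ∀ (xv : Fin n → Fin 2) (y : Fin n → Fin 2), wgt (RRmat ε) μ xv y =
      (∫ p, ∏ i, p (xv i) ∂μ) * ∏ i, RRmat ε (y i) (xv i) := by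
    intro xv y
    simp only [wgt, Finset.prod_mul_distrib, integral_mul_const]
  have hx : ∀ xv : Fin n → Fin 2,
      ∑ y : Fin n → Fin 2, wgt (RRmat ε) μ xv y * ∑ α, (freqVec xv α - PiRR ε y α) ^ 2 =
        (∫ p, ∏ i, p (xv i) ∂μ) * (2 * Real.exp ε / ((n : ℝ) * (Real.exp ε - 1) ^ 2)) := by
    intro xv
    simp only [hw, mul_assoc, ← Finset.mul_sum]
    congr 1
    simp only [Fin.sum_univ_two, mul_add, Finset.sum_add_distrib, RR_conditional ε hε hn]
    ring
  simp only [MSEfreq, hx, ← Finset.sum_mul, sum_integral_prod n μ hμsupp, one_mul]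

end
end
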